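/- arXiv:2009.08262 — 2 statements merged into one kernel-verified Lean document; each statement's English description precedes it below -/
import Mathlib

section
/- Let g ∈ H', f^0 ∈ H, and define the iterates f^{n+1} = T(f^n) where T(f) = S_{W,P}(f + K*(g − Kf)). Then: (A) there exists f* ∈ H such that (f^n) converges weakly to f* and f* is a minimizer of Φ over H; (B) if moreover either K is injective or p_γ > 1 for every γ ∈ Γ, then Φ has a unique minimizer. -/
open scoped RealInnerProductSpace ENNReal

/-!
Adding `‖h - f‖² - ‖K (h - f)‖²` to the functional decouples its coordinates, and the minimizer in
`h` of the sum is the thresholded Landweber step `T f`. A minimizer of a quadratic plus a convex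
function has quadratic growth; applied to `T f` this makes the functional decrease along the
iteration, and applied to a minimizer `z` of `Φ` as well it bounds the excess of the functional at
`T f` by a telescoping quantity and makes the distance to `z` nonincreasing. All this needs only
`‖K‖² < 2`, because `‖K (T f - f)‖² ≤ 2 ‖K (T f - z)‖² + 2 ‖K (z - f)‖²`. Hence the functional
converges to its minimum, convex closed sublevel sets being weakly closed makes every weak cluster
point a minimizer, and Opial's lemma gives weak convergence. Uniqueness is strict convexity, of the
discrepancy when `K` is injective and of the penalty when all exponents exceed `1`.
-/

open Filter Topology

section WeakTopology

theorem isClosed_toWeakSpace_image_of_convex {E : Type*} [AddCommGroup E] [Module ℝ E]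
    [TopologicalSpace E] [IsTopologicalAddGroup E] [ContinuousSMul ℝ E] [LocallyConvexSpace ℝ E]
    {s : Set E} (hconv : Convex ℝ s) (hclosed : IsClosed s) :
    IsClosed (toWeakSpace ℝ E '' s) := by
  rw [← hclosed.closure_eq, hconv.toWeakSpace_closure ℝ]
  exact isClosed_closure

variable {H : Type*} [NormedAddCommGroup H] [InnerProductSpace ℝ H]

theorem continuous_inner_toWeakSpace_symm (y : H) :
    Continuous fun x : WeakSpace ℝ H => ⟪(toWeakSpace ℝ H).symm x, y⟫ := by
  simp only [real_inner_comm y]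
  exact WeakBilin.eval_continuous (topDualPairing ℝ H).flip (innerSL ℝ y)

variable [CompleteSpace H]

theorem isCompact_toWeakSpace_image_closedBall (r : ℝ) :
    IsCompact (toWeakSpace ℝ H '' Metric.closedBall 0 r) := by
  let riesz : WeakDual ℝ H → WeakSpace ℝ H := fun l =>
    toWeakSpace ℝ H ((InnerProductSpace.toDual ℝ H).symm (WeakDual.toStrongDual l))
  have hriesz : Continuous riesz := WeakBilin.continuous_of_continuous_eval _ fun l => by
    refine (WeakDual.eval_continuous ((InnerProductSpace.toDual ℝ H).symm l)).congr fun m => ?_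
    change WeakDual.toStrongDual m _ =
      l ((InnerProductSpace.toDual ℝ H).symm (WeakDual.toStrongDual m))
    rw [← InnerProductSpace.toDual_symm_apply (y := l), ← InnerProductSpace.toDual_symm_apply]
    exact real_inner_comm _ _
  refine ((WeakDual.isCompact_closedBall 0 r).image hriesz).of_isClosed_subset
    (isClosed_toWeakSpace_image_of_convex (convex_closedBall 0 r) Metric.isClosed_closedBall) ?_
  rintro _ ⟨x, hx, rfl⟩
  refine ⟨StrongDual.toWeakDual (InnerProductSpace.toDual ℝ H x), by simpa using hx, ?_⟩
  exact congrArg (toWeakSpace ℝ H) ((InnerProductSpace.toDual ℝ H).symm_apply_apply x)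

theorem isCompact_toWeakSpace_image_of_convex {s : Set H} (hconv : Convex ℝ s)
    (hclosed : IsClosed s) (hbdd : Bornology.IsBounded s) :
    IsCompact (toWeakSpace ℝ H '' s) := by
  obtain ⟨r, hr⟩ := hbdd.subset_closedBall 0
  exact (isCompact_toWeakSpace_image_closedBall r).of_isClosed_subset
    (isClosed_toWeakSpace_image_of_convex hconv hclosed) (Set.image_mono hr)

theorem exists_isMinOn_of_quasiconvexOn {β : Type*} [LinearOrder β] {D : Set H} {J : H → β}
    (hD : D.Nonempty) (hconv : QuasiconvexOn ℝ D J) (hclosed : ∀ c, IsClosed {f ∈ D | J f ≤ c})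
    (hbdd : ∀ c, Bornology.IsBounded {f ∈ D | J f ≤ c}) :
    ∃ z ∈ D, IsMinOn J D z := by
  let sublevel : D → Set (WeakSpace ℝ H) := fun h => toWeakSpace ℝ H '' {f ∈ D | J f ≤ J h}
  have hmono : ∀ h k : D, J h ≤ J k → sublevel h ⊆ sublevel k := fun h k hhk =>
    Set.image_mono fun f hf => ⟨hf.1, hf.2.trans hhk⟩
  have hdirected : Directed (· ⊇ ·) sublevel := fun h k =>
    (le_total (J h) (J k)).elim (fun hhk => ⟨h, subset_rfl, hmono h k hhk⟩)
      fun hkh => ⟨k, hmono k h hkh, subset_rfl⟩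
  have : Nonempty D := hD.to_subtype
  obtain ⟨z, hz⟩ := IsCompact.nonempty_iInter_of_directed_nonempty_isCompact_isClosed sublevel
    hdirected (fun h => ⟨_, h, ⟨h.2, le_rfl⟩, rfl⟩)
    (fun h => isCompact_toWeakSpace_image_of_convex (hconv _) (hclosed _) (hbdd _))
    (fun h => isClosed_toWeakSpace_image_of_convex (hconv _) (hclosed _))
  have hz' : ∀ h : D, (toWeakSpace ℝ H).symm z ∈ {f ∈ D | J f ≤ J h} := fun h => by
    obtain ⟨f, hf, rfl⟩ := Set.mem_iInter.1 hz h
    simpa using hf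
  exact ⟨_, (hz' this.some).1, fun h hh => (hz' ⟨h, hh⟩).2⟩

/-- **Opial's lemma**. -/
theorem exists_tendsto_toWeakSpace_of_tendsto_norm_sub {ι : Type*} {l : Filter ι} [l.NeBot]
    {x : ι → H} {C : Set H} (hC : C.Nonempty)
    (hnorm : ∀ z ∈ C, ∃ r, Tendsto (fun n => ‖z - x n‖) l (𝓝 r))
    (hcluster : ∀ a, MapClusterPt (toWeakSpace ℝ H a) l (fun n => toWeakSpace ℝ H (x n)) → a ∈ C) :
    ∃ a ∈ C, Tendsto (fun n => toWeakSpace ℝ H (x n)) l (𝓝 (toWeakSpace ℝ H a)) := by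
  obtain ⟨R, hR⟩ : ∃ R, ∀ᶠ n in l, toWeakSpace ℝ H (x n) ∈
      toWeakSpace ℝ H '' Metric.closedBall 0 R := by
    obtain ⟨z, hz⟩ := hC
    obtain ⟨r, hr⟩ := hnorm z hz
    refine ⟨‖z‖ + (r + 1), (hr.eventually_lt_const (lt_add_one r)).mono fun n hn =>
      ⟨x n, mem_closedBall_zero_iff.2 ?_, rfl⟩⟩
    calc ‖x n‖ = ‖z - (z - x n)‖ := by rw [sub_sub_cancel]
      _ ≤ ‖z‖ + (r + 1) := (norm_sub_le _ _).trans (by gcongr)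
  have hinner : ∀ a ∈ C, ∀ b ∈ C, ∃ q, Tendsto (fun n => ⟪x n, a - b⟫) l (𝓝 q) := by
    intro a ha b hb
    obtain ⟨r, hr⟩ := hnorm a ha
    obtain ⟨s, hs⟩ := hnorm b hb
    refine ⟨_, ((((hs.pow 2).sub (hr.pow 2)).add_const (‖a‖ ^ 2 - ‖b‖ ^ 2)).div_const 2).congr
      fun n => ?_⟩
    rw [norm_sub_sq_real, norm_sub_sq_real, inner_sub_right, real_inner_comm (x n) a,
      real_inner_comm (x n) b]
    ring
  have hunique : ∀ a b, MapClusterPt (toWeakSpace ℝ H a) l (fun n => toWeakSpace ℝ H (x n)) →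
      MapClusterPt (toWeakSpace ℝ H b) l (fun n => toWeakSpace ℝ H (x n)) → a = b := by
    intro a b ha hb
    obtain ⟨q, hq⟩ := hinner a (hcluster a ha) b (hcluster b hb)
    have hlim : ∀ z, MapClusterPt (toWeakSpace ℝ H z) l (fun n => toWeakSpace ℝ H (x n)) →
        ⟪z, a - b⟫ = q := fun z hz => by
      have h := hz.continuousAt_comp (continuous_inner_toWeakSpace_symm (a - b)).continuousAt
      exact eq_of_nhds_neBot (h.neBot.mono (inf_le_inf_left _ hq))
    rw [← sub_eq_zero, ← inner_self_eq_zero (𝕜 := ℝ), inner_sub_left, hlim a ha, hlim b hb,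
      sub_self]
  have hcompact := isCompact_toWeakSpace_image_closedBall (H := H) R
  obtain ⟨-, ⟨a, -, rfl⟩, ha⟩ := hcompact.exists_mapClusterPt_of_frequently hR.frequently
  refine ⟨a, hcluster a ha, hcompact.tendsto_nhds_of_unique_mapClusterPt hR ?_⟩
  rintro - ⟨b, -, rfl⟩ hb
  rw [hunique b a hb ha]

end WeakTopology

section PenalizedLeastSquares

/-- The functional `f ↦ ‖K f - g‖² + ψ f`, to be minimized over the effective domain `D` of the
penalty `ψ`. Since `ψ` is real-valued, `D` is always carried as a separate set. -/
def penalizedLeastSquares {E F : Type*} [AddCommGroup E] [Module ℝ E] [TopologicalSpace E]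
    [SeminormedAddCommGroup F] [NormedSpace ℝ F] (K : E →L[ℝ] F) (g : F) (ψ : E → ℝ) (f : E) : ℝ :=
  ‖K f - g‖ ^ 2 + ψ f

theorem penalizedLeastSquares_nonneg {E F : Type*} [AddCommGroup E] [Module ℝ E]
    [TopologicalSpace E] [SeminormedAddCommGroup F] [NormedSpace ℝ F] {K : E →L[ℝ] F} {g : F}
    {ψ : E → ℝ} {f : E} (hψ : 0 ≤ ψ f) : 0 ≤ penalizedLeastSquares K g ψ f :=
  add_nonneg (sq_nonneg _) hψ

variable {F : Type*} [NormedAddCommGroup F] [InnerProductSpace ℝ F]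

theorem norm_sq_smul_add_smul (u v : F) {s t : ℝ} (hst : s + t = 1) :
    ‖s • u + t • v‖ ^ 2 = s * ‖u‖ ^ 2 + t * ‖v‖ ^ 2 - s * t * ‖u - v‖ ^ 2 := by
  obtain rfl : s = 1 - t := by linarith
  simp only [← real_inner_self_eq_norm_sq, inner_add_left, inner_add_right, inner_sub_left,
    inner_sub_right, real_inner_smul_left, real_inner_smul_right, real_inner_comm u v]
  ring

variable {E : Type*} [AddCommGroup E] [Module ℝ E] [TopologicalSpace E] {K : E →L[ℝ] F} {g : F}
  {ψ : E → ℝ} {D : Set E}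

theorem norm_map_smul_add_smul_sub_sq (K : E →L[ℝ] F) (g : F) (x y : E) {s t : ℝ}
    (hst : s + t = 1) :
    ‖K (s • x + t • y) - g‖ ^ 2 =
      s * ‖K x - g‖ ^ 2 + t * ‖K y - g‖ ^ 2 - s * t * ‖K (x - y)‖ ^ 2 := by
  have hres : K (s • x + t • y) - g = s • (K x - g) + t • (K y - g) := by
    obtain rfl : s = 1 - t := by linarith
    rw [map_add, map_smul, map_smul]
    module
  rw [hres, norm_sq_smul_add_smul _ _ hst, sub_sub_sub_cancel_right, ← map_sub]

theorem penalizedLeastSquares_combo_add_le (hψ : ConvexOn ℝ D ψ) {x y : E} (hx : x ∈ D)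
    (hy : y ∈ D) {s t : ℝ} (hs : 0 ≤ s) (ht : 0 ≤ t) (hst : s + t = 1) :
    penalizedLeastSquares K g ψ (s • x + t • y) + s * t * ‖K (x - y)‖ ^ 2 ≤
      s * penalizedLeastSquares K g ψ x + t * penalizedLeastSquares K g ψ y := by
  have h := hψ.2 hx hy hs ht hst
  simp only [smul_eq_mul] at h
  simp only [penalizedLeastSquares, norm_map_smul_add_smul_sub_sq K g x y hst]
  linarith

theorem convexOn_penalizedLeastSquares (hψ : ConvexOn ℝ D ψ) :
    ConvexOn ℝ D (penalizedLeastSquares K g ψ) :=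
  ⟨hψ.1, fun _ hx _ hy _ _ hs ht hst =>
    (le_add_of_nonneg_right (by positivity)).trans
      (penalizedLeastSquares_combo_add_le hψ hx hy hs ht hst)⟩

theorem strictConvexOn_penalizedLeastSquares_of_injective (hK : Function.Injective K)
    (hψ : ConvexOn ℝ D ψ) : StrictConvexOn ℝ D (penalizedLeastSquares K g ψ) := by
  refine ⟨hψ.1, fun x hx y hy hxy s t hs ht hst => ?_⟩
  have hpos : 0 < ‖K (x - y)‖ := by
    rw [map_sub, norm_pos_iff, sub_ne_zero]
    exact hK.ne hxy
  exact (lt_add_of_pos_right _ (by positivity)).trans_le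
    (penalizedLeastSquares_combo_add_le hψ hx hy hs.le ht.le hst)

theorem strictConvexOn_penalizedLeastSquares (hψ : StrictConvexOn ℝ D ψ) :
    StrictConvexOn ℝ D (penalizedLeastSquares K g ψ) := by
  refine (StrictConvexOn.add_convexOn hψ
    (convexOn_penalizedLeastSquares (K := K) (g := g) (convexOn_const 0 hψ.1))).congr ?_
  intro f _
  simp [penalizedLeastSquares, add_comm]

theorem penalizedLeastSquares_add_norm_sq_le_of_isMinOn (hψ : ConvexOn ℝ D ψ) {a h : E}
    (ha : a ∈ D) (hmin : IsMinOn (penalizedLeastSquares K g ψ) D a) (hh : h ∈ D) :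
    penalizedLeastSquares K g ψ a + ‖K (h - a)‖ ^ 2 ≤ penalizedLeastSquares K g ψ h := by
  set J := penalizedLeastSquares K g ψ
  have hsegment : ∀ t ∈ Set.Ioo (0 : ℝ) 1, (1 - t) * ‖K (h - a)‖ ^ 2 ≤ J h - J a := by
    rintro t ⟨ht0, ht1⟩
    have hcombo := penalizedLeastSquares_combo_add_le (K := K) (g := g) hψ hh ha ht0.le
      (sub_nonneg.2 ht1.le) (add_sub_cancel t 1)
    have hle : J a ≤ J (t • h + (1 - t) • a) :=
      hmin (hψ.1 hh ha ht0.le (sub_nonneg.2 ht1.le) (add_sub_cancel t 1))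
    refine le_of_mul_le_mul_left ?_ ht0
    linarith
  have hlim : Tendsto (fun t : ℝ => (1 - t) * ‖K (h - a)‖ ^ 2) (𝓝[>] 0)
      (𝓝 ((1 - 0) * ‖K (h - a)‖ ^ 2)) :=
    ((by fun_prop : Continuous fun t : ℝ => (1 - t) * ‖K (h - a)‖ ^ 2).tendsto 0).mono_left
      nhdsWithin_le_nhds
  have hle := le_of_tendsto hlim (eventually_of_mem (Ioo_mem_nhdsGT one_pos) hsegment)
  linarith

end PenalizedLeastSquares

section ProximalLandweber

variable {H H' : Type*} [NormedAddCommGroup H] [InnerProductSpace ℝ H] [CompleteSpace H]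
  [NormedAddCommGroup H'] [InnerProductSpace ℝ H'] [CompleteSpace H']

theorem norm_map_sq_le {E F : Type*} [SeminormedAddCommGroup E] [NormedSpace ℝ E]
    [SeminormedAddCommGroup F] [NormedSpace ℝ F] (K : E →L[ℝ] F) (x : E) :
    ‖K x‖ ^ 2 ≤ ‖K‖ ^ 2 * ‖x‖ ^ 2 := by
  rw [← mul_pow]
  gcongr
  exact K.le_opNorm x

/-- One step of the Landweber iteration for `K f = g`: a gradient step, of step size `1 / 2`, for
the discrepancy `‖K f - g‖²`. -/
noncomputable def landweberStep (K : H →L[ℝ] H') (g : H') (f : H) : H :=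
  f + (ContinuousLinearMap.adjoint K) (g - K f)

/-- `a` is obtained from `f` by a Landweber step followed by the proximal map of the penalty `ψ`
with effective domain `D`, i.e. `a` minimizes `h ↦ ‖h - landweberStep K g f‖² + ψ h` over `D`.
This is a relation since such a minimizer need not exist. -/
def IsProximalLandweberStep (K : H →L[ℝ] H') (g : H') (ψ : H → ℝ) (D : Set H) (f a : H) : Prop :=
  a ∈ D ∧
    IsMinOn (penalizedLeastSquares (ContinuousLinearMap.id ℝ H) (landweberStep K g f) ψ) D a

variable {K : H →L[ℝ] H'} {g : H'} {ψ : H → ℝ} {D : Set H} {f a h z : H}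

theorem norm_sub_landweberStep_sq (K : H →L[ℝ] H') (g : H') (f h : H) :
    ‖h - landweberStep K g f‖ ^ 2 = ‖h - f‖ ^ 2 - ‖K (h - f)‖ ^ 2 + ‖K h - g‖ ^ 2 +
      (‖(ContinuousLinearMap.adjoint K) (g - K f)‖ ^ 2 - ‖K f - g‖ ^ 2) := by
  have hstep : h - landweberStep K g f =
      (h - f) - (ContinuousLinearMap.adjoint K) (g - K f) := by
    rw [landweberStep, sub_sub]
  have hres : K h - g = K (h - f) - (g - K f) := by
    rw [map_sub]
    abel
  rw [hstep, hres, norm_sub_sq_real, norm_sub_sq_real (K (h - f)),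
    ContinuousLinearMap.adjoint_inner_right, norm_sub_rev (K f) g]
  ring

namespace IsProximalLandweberStep

/- Up to a constant, `‖h - landweberStep K g f‖²` is the discrepancy of `h` plus
`‖h - f‖² - ‖K (h - f)‖²`, so this is the quadratic growth of the proximal functional at `a`. -/
theorem penalizedLeastSquares_add_le (hψ : ConvexOn ℝ D ψ)
    (hstep : IsProximalLandweberStep K g ψ D f a) (hh : h ∈ D) :
    penalizedLeastSquares K g ψ a + (‖a - f‖ ^ 2 - ‖K (a - f)‖ ^ 2) + ‖h - a‖ ^ 2 ≤
      penalizedLeastSquares K g ψ h + (‖h - f‖ ^ 2 - ‖K (h - f)‖ ^ 2) := by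
  have hgrowth := penalizedLeastSquares_add_norm_sq_le_of_isMinOn hψ hstep.1 hstep.2 hh
  simp only [penalizedLeastSquares, ContinuousLinearMap.id_apply,
    norm_sub_landweberStep_sq] at hgrowth ⊢
  linarith

theorem penalizedLeastSquares_add_mul_norm_sq_le (hψ : ConvexOn ℝ D ψ)
    (hstep : IsProximalLandweberStep K g ψ D f a) (hf : f ∈ D) :
    penalizedLeastSquares K g ψ a + (2 - ‖K‖ ^ 2) * ‖a - f‖ ^ 2 ≤
      penalizedLeastSquares K g ψ f := by
  have h := hstep.penalizedLeastSquares_add_le hψ hf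
  rw [sub_self, map_zero, norm_zero, norm_zero, norm_sub_rev f a] at h
  linarith [norm_map_sq_le K (a - f)]

theorem norm_sub_le_of_isMinOn (hK : ‖K‖ ^ 2 ≤ 2) (hψ : ConvexOn ℝ D ψ)
    (hstep : IsProximalLandweberStep K g ψ D f a) (hz : z ∈ D)
    (hmin : IsMinOn (penalizedLeastSquares K g ψ) D z) : ‖z - a‖ ≤ ‖z - f‖ := by
  have hgrowth := penalizedLeastSquares_add_norm_sq_le_of_isMinOn hψ hz hmin hstep.1
  have hparallelogram : ‖K (a - f)‖ ^ 2 ≤ 2 * ‖K (a - z)‖ ^ 2 + 2 * ‖K (z - f)‖ ^ 2 := by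
    rw [← sub_add_sub_cancel a z f, map_add]
    nlinarith [parallelogram_law_with_norm ℝ (K (a - z)) (K (z - f)),
      mul_self_nonneg ‖K (a - z) - K (z - f)‖]
  refine (sq_le_sq₀ (norm_nonneg _) (norm_nonneg _)).1 ?_
  nlinarith [hstep.penalizedLeastSquares_add_le hψ hz, norm_map_sq_le K (a - f),
    sq_nonneg ‖a - f‖]

theorem penalizedLeastSquares_sub_le (hK : ‖K‖ ^ 2 < 2) (hψ : ConvexOn ℝ D ψ)
    (hstep : IsProximalLandweberStep K g ψ D f a) (hf : f ∈ D) (hz : z ∈ D) :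
    penalizedLeastSquares K g ψ a - penalizedLeastSquares K g ψ z ≤
      (‖z - f‖ ^ 2 - ‖z - a‖ ^ 2) +
        (penalizedLeastSquares K g ψ f - penalizedLeastSquares K g ψ a) / (2 - ‖K‖ ^ 2) := by
  have hdescent : ‖a - f‖ ^ 2 ≤
      (penalizedLeastSquares K g ψ f - penalizedLeastSquares K g ψ a) / (2 - ‖K‖ ^ 2) := by
    rw [le_div_iff₀ (sub_pos.2 hK)]
    linarith [hstep.penalizedLeastSquares_add_mul_norm_sq_le hψ hf]
  nlinarith [hstep.penalizedLeastSquares_add_le hψ hz, norm_map_sq_le K (a - f),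
    sq_nonneg ‖a - f‖, sq_nonneg ‖K (z - f)‖]

end IsProximalLandweberStep

theorem tendsto_zero_of_le_sub_succ {u d : ℕ → ℝ} (hu : ∀ n, 0 ≤ u n) (hd : ∀ n, 0 ≤ d n)
    (h : ∀ n, u n ≤ d n - d (n + 1)) : Tendsto u atTop (𝓝 0) := by
  refine (summable_of_sum_range_le (c := d 0) hu fun n => ?_).tendsto_atTop_zero
  calc ∑ i ∈ Finset.range n, u i ≤ ∑ i ∈ Finset.range n, (d i - d (i + 1)) :=
        Finset.sum_le_sum fun i _ => h i
    _ = d 0 - d n := Finset.sum_range_sub' d n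
    _ ≤ d 0 := sub_le_self _ (hd n)

variable {x : ℕ → H}

theorem tendsto_penalizedLeastSquares_of_isProximalLandweberStep (hK : ‖K‖ ^ 2 < 2)
    (hψ : ConvexOn ℝ D ψ) (hstep : ∀ n, IsProximalLandweberStep K g ψ D (x n) (x (n + 1)))
    (hz : z ∈ D) (hmin : IsMinOn (penalizedLeastSquares K g ψ) D z) :
    Tendsto (fun n => penalizedLeastSquares K g ψ (x n)) atTop
      (𝓝 (penalizedLeastSquares K g ψ z)) := by
  set J := penalizedLeastSquares K g ψ
  have hgap : ∀ n, 0 ≤ J (x (n + 1)) - J z := fun n => sub_nonneg.2 (hmin (hstep n).1)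
  have hden : 0 ≤ 2 - ‖K‖ ^ 2 := (sub_pos.2 hK).le
  have hlim : Tendsto (fun n => J (x (n + 2)) - J z) atTop (𝓝 0) :=
    tendsto_zero_of_le_sub_succ
      (d := fun n => ‖z - x (n + 1)‖ ^ 2 + (J (x (n + 1)) - J z) / (2 - ‖K‖ ^ 2))
      (fun n => hgap (n + 1)) (fun n => add_nonneg (sq_nonneg _) (div_nonneg (hgap n) hden))
      fun n => ((hstep (n + 1)).penalizedLeastSquares_sub_le hK hψ (hstep n).1 hz).trans_eq
        (by ring)
  refine (tendsto_add_atTop_iff_nat 2).1 ?_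
  simpa only [sub_add_cancel, zero_add] using hlim.add_const (J z)

theorem exists_isMinOn_tendsto_of_isProximalLandweberStep (hK : ‖K‖ ^ 2 < 2)
    (hψ : ConvexOn ℝ D ψ)
    (hclosed : ∀ c, IsClosed {f ∈ D | penalizedLeastSquares K g ψ f ≤ c})
    (hexists : ∃ z ∈ D, IsMinOn (penalizedLeastSquares K g ψ) D z)
    (hstep : ∀ n, IsProximalLandweberStep K g ψ D (x n) (x (n + 1))) :
    ∃ a ∈ D, IsMinOn (penalizedLeastSquares K g ψ) D a ∧
      Tendsto (fun n => toWeakSpace ℝ H (x n)) atTop (𝓝 (toWeakSpace ℝ H a)) := by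
  set J := penalizedLeastSquares K g ψ
  obtain ⟨z, hz, hmin⟩ := hexists
  have hvalues : Tendsto (fun n => J (x n)) atTop (𝓝 (J z)) :=
    tendsto_penalizedLeastSquares_of_isProximalLandweberStep hK hψ hstep hz hmin
  have hdomain : ∀ᶠ n in atTop, x n ∈ D :=
    (eventually_ge_atTop 1).mono fun n hn => by
      obtain ⟨k, rfl⟩ := Nat.exists_eq_add_of_le' hn
      exact (hstep k).1
  have hsublevel : ∀ b, MapClusterPt (toWeakSpace ℝ H b) atTop (fun n => toWeakSpace ℝ H (x n)) →
      ∀ c > J z, b ∈ {f ∈ D | J f ≤ c} := fun b hb c hc => by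
    have hmem := (isClosed_toWeakSpace_image_of_convex
      ((convexOn_penalizedLeastSquares hψ).quasiconvexOn c) (hclosed c)).mem_of_mapClusterPt hb <|
        (hdomain.and (hvalues.eventually_lt_const hc)).mono fun n hn =>
          Set.mem_image_of_mem _ ⟨hn.1, hn.2.le⟩
    exact (toWeakSpace ℝ H).injective.mem_set_image.1 hmem
  obtain ⟨a, ⟨ha, hamin⟩, hlim⟩ := exists_tendsto_toWeakSpace_of_tendsto_norm_sub
    (C := {b ∈ D | IsMinOn J D b}) ⟨z, hz, hmin⟩
    (fun b hb => ⟨_, tendsto_atTop_ciInf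
      (antitone_nat_of_succ_le fun n => (hstep n).norm_sub_le_of_isMinOn hK.le hψ hb.1 hb.2)
      ⟨0, Set.forall_mem_range.2 fun n => norm_nonneg _⟩⟩)
    fun b hb => ⟨(hsublevel b hb _ (lt_add_one _)).1, fun h hh =>
      (le_of_forall_gt_imp_ge_of_dense fun c hc => (hsublevel b hb c hc).2).trans (hmin hh)⟩
  exact ⟨a, ha, hamin, hlim⟩

end ProximalLandweber

section SeparablePenalty

variable {H : Type*} [NormedAddCommGroup H] [InnerProductSpace ℝ H] {Γ : Type*}

/-- The effective domain of `separablePenalty e φ`: the vectors at which its series converges. -/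
def separableDomain (e : Γ → H) (φ : Γ → ℝ → ℝ) : Set H :=
  {f | Summable fun γ => φ γ ⟪f, e γ⟫}

/-- The penalty `∑ γ, φ γ ⟪f, e γ⟫` acting coordinatewise on the coefficients of `f`. It takes the
junk value `0` outside `separableDomain e φ`, where for `φ ≥ 0` the sum is infinite. -/
noncomputable def separablePenalty (e : Γ → H) (φ : Γ → ℝ → ℝ) (f : H) : ℝ :=
  ∑' γ, φ γ ⟪f, e γ⟫

section Family

variable {e : Γ → H} {φ : Γ → ℝ → ℝ}

theorem separablePenalty_nonneg (hφ₀ : ∀ γ t, 0 ≤ φ γ t) (f : H) : 0 ≤ separablePenalty e φ f :=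
  tsum_nonneg fun γ => hφ₀ γ _

theorem convexOn_separablePenalty (hφ₀ : ∀ γ t, 0 ≤ φ γ t)
    (hφ : ∀ γ, ConvexOn ℝ Set.univ (φ γ)) :
    ConvexOn ℝ (separableDomain e φ) (separablePenalty e φ) := by
  have hcoord : ∀ x y : H, ∀ s t : ℝ, 0 ≤ s → 0 ≤ t → s + t = 1 → ∀ γ,
      φ γ ⟪s • x + t • y, e γ⟫ ≤ s • φ γ ⟪x, e γ⟫ + t • φ γ ⟪y, e γ⟫ :=
    fun x y s t hs ht hst γ => by
      rw [inner_add_left, real_inner_smul_left, real_inner_smul_left]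
      exact (hφ γ).2 (Set.mem_univ _) (Set.mem_univ _) hs ht hst
  have hconv : Convex ℝ (separableDomain e φ) := fun x hx y hy s t hs ht hst =>
    Summable.of_nonneg_of_le (fun γ => hφ₀ γ _) (hcoord x y s t hs ht hst)
      ((hx.const_smul s).add (hy.const_smul t))
  exact ⟨hconv, fun x hx y hy s t hs ht hst =>
    hasSum_le (hcoord x y s t hs ht hst) (hconv hx hy hs ht hst).hasSum
      ((hx.hasSum.const_smul s).add (hy.hasSum.const_smul t))⟩

variable {F : Type*} [SeminormedAddCommGroup F] [NormedSpace ℝ F] {K : H →L[ℝ] F} {g : F}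

theorem isClosed_sublevel_penalizedLeastSquares (hφ₀ : ∀ γ t, 0 ≤ φ γ t)
    (hφc : ∀ γ, Continuous (φ γ)) (c : ℝ) :
    IsClosed {f ∈ separableDomain e φ |
      penalizedLeastSquares K g (separablePenalty e φ) f ≤ c} := by
  have hpartial : {f ∈ separableDomain e φ |
      penalizedLeastSquares K g (separablePenalty e φ) f ≤ c} =
      ⋂ s : Finset Γ, {f | ‖K f - g‖ ^ 2 + ∑ γ ∈ s, φ γ ⟪f, e γ⟫ ≤ c} := by
    ext f
    simp only [penalizedLeastSquares, Set.mem_ofPred_eq, Set.mem_iInter, ← le_sub_iff_add_le']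
    refine ⟨fun hf s => (hf.1.sum_le_tsum s fun γ _ => hφ₀ γ _).trans hf.2, fun hf => ?_⟩
    have hsum : Summable fun γ => φ γ ⟪f, e γ⟫ := summable_of_sum_le (fun γ => hφ₀ γ _) hf
    exact ⟨hsum, hsum.tsum_le_of_sum_le hf⟩
  rw [hpartial]
  exact isClosed_iInter fun s => isClosed_le (by fun_prop) continuous_const

theorem ofReal_penalizedLeastSquares (hφ₀ : ∀ γ t, 0 ≤ φ γ t) {f : H}
    (hf : f ∈ separableDomain e φ) :
    ENNReal.ofReal (penalizedLeastSquares K g (separablePenalty e φ) f) =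
      ENNReal.ofReal (‖K f - g‖ ^ 2) + ∑' γ, ENNReal.ofReal (φ γ ⟪f, e γ⟫) := by
  rw [penalizedLeastSquares, ENNReal.ofReal_add (sq_nonneg _) (separablePenalty_nonneg hφ₀ f),
    separablePenalty, ENNReal.ofReal_tsum_of_nonneg (fun γ => hφ₀ γ _) hf]

theorem mem_separableDomain_of_tsum_ofReal_ne_top (hφ₀ : ∀ γ t, 0 ≤ φ γ t) {f : H}
    (hf : ∑' γ, ENNReal.ofReal (φ γ ⟪f, e γ⟫) ≠ ⊤) : f ∈ separableDomain e φ :=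
  (ENNReal.summable_toReal hf).congr fun γ => ENNReal.toReal_ofReal (hφ₀ γ _)

theorem forall_le_iff_isMinOn_separableDomain (hφ₀ : ∀ γ t, 0 ≤ φ γ t)
    (hdom : (separableDomain e φ).Nonempty) {Φ : H → ℝ≥0∞}
    (hΦ : ∀ f, Φ f = ENNReal.ofReal (‖K f - g‖ ^ 2) + ∑' γ, ENNReal.ofReal (φ γ ⟪f, e γ⟫))
    {a : H} :
    (∀ f, Φ a ≤ Φ f) ↔ a ∈ separableDomain e φ ∧
      IsMinOn (penalizedLeastSquares K g (separablePenalty e φ)) (separableDomain e φ) a := by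
  have hfinite : ∀ f ∈ separableDomain e φ,
      Φ f = ENNReal.ofReal (penalizedLeastSquares K g (separablePenalty e φ) f) := fun f hf =>
    (hΦ f).trans (ofReal_penalizedLeastSquares hφ₀ hf).symm
  have hmem : ∀ f, Φ f ≠ ⊤ → f ∈ separableDomain e φ := fun f hf =>
    mem_separableDomain_of_tsum_ofReal_ne_top hφ₀ (ENNReal.add_ne_top.1 (hΦ f ▸ hf)).2
  constructor
  · intro hmin
    obtain ⟨f₀, hf₀⟩ := hdom
    have ha := hmem a (ne_top_of_le_ne_top (hfinite f₀ hf₀ ▸ ENNReal.ofReal_ne_top) (hmin f₀))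
    refine ⟨ha, fun f hf => ?_⟩
    have hle := hmin f
    rwa [hfinite a ha, hfinite f hf, ENNReal.ofReal_le_ofReal_iff
      (penalizedLeastSquares_nonneg (separablePenalty_nonneg hφ₀ f))] at hle
  · rintro ⟨ha, hmin⟩ f
    by_cases hf : Φ f = ⊤
    · exact hf ▸ le_top
    · rw [hfinite a ha, hfinite f (hmem f hf)]
      exact ENNReal.ofReal_le_ofReal (hmin (hmem f hf))

end Family

variable {e : HilbertBasis Γ ℝ H} {φ : Γ → ℝ → ℝ}

theorem hasSum_inner_sq (e : HilbertBasis Γ ℝ H) (x : H) :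
    HasSum (fun γ => ⟪x, e γ⟫ ^ 2) (‖x‖ ^ 2) := by
  simpa only [real_inner_self_eq_norm_sq, real_inner_comm x, sq] using
    e.hasSum_inner_mul_inner x x

theorem strictConvexOn_separablePenalty (hφ₀ : ∀ γ t, 0 ≤ φ γ t)
    (hφ : ∀ γ, StrictConvexOn ℝ Set.univ (φ γ)) :
    StrictConvexOn ℝ (separableDomain e φ) (separablePenalty e φ) := by
  have hconv := (convexOn_separablePenalty (e := e) hφ₀ fun γ => (hφ γ).convexOn).1
  refine ⟨hconv, fun x hx y hy hxy s t hs ht hst => ?_⟩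
  have hcoord : ∀ γ, ⟪s • x + t • y, e γ⟫ = s • ⟪x, e γ⟫ + t • ⟪y, e γ⟫ := fun γ => by
    rw [inner_add_left, real_inner_smul_left, real_inner_smul_left, smul_eq_mul, smul_eq_mul]
  obtain ⟨γ, hγ⟩ : ∃ γ, ⟪x, e γ⟫ ≠ ⟪y, e γ⟫ := by
    contrapose! hxy
    refine e.repr.injective (lp.ext (funext fun γ => ?_))
    rw [e.repr_apply_apply, e.repr_apply_apply, real_inner_comm, hxy, real_inner_comm]
  refine hasSum_lt (i := γ) (fun δ => ?_) ?_ (hconv hx hy hs.le ht.le hst).hasSum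
    ((hx.hasSum.const_smul s).add (hy.hasSum.const_smul t))
  · rw [hcoord]
    exact (hφ δ).convexOn.2 (Set.mem_univ _) (Set.mem_univ _) hs.le ht.le hst
  · rw [hcoord]
    exact (hφ γ).2 (Set.mem_univ _) (Set.mem_univ _) hγ hs ht hst

theorem mem_separableDomain_and_isMinOn_of_coordinatewise (hφ₀ : ∀ γ t, 0 ≤ φ γ t)
    (hdom : (separableDomain e φ).Nonempty) {v a : H}
    (ha : ∀ γ t, ⟪a, e γ⟫ ^ 2 - 2 * ⟪v, e γ⟫ * ⟪a, e γ⟫ + φ γ ⟪a, e γ⟫ ≤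
      t ^ 2 - 2 * ⟪v, e γ⟫ * t + φ γ t) :
    a ∈ separableDomain e φ ∧
      IsMinOn (penalizedLeastSquares (ContinuousLinearMap.id ℝ H) v (separablePenalty e φ))
        (separableDomain e φ) a := by
  have hle : ∀ h : H, ∀ γ, ⟪a - v, e γ⟫ ^ 2 + φ γ ⟪a, e γ⟫ ≤
      ⟪h - v, e γ⟫ ^ 2 + φ γ ⟪h, e γ⟫ := fun h γ => by
    rw [inner_sub_left, inner_sub_left]
    linarith [ha γ ⟪h, e γ⟫]
  obtain ⟨h₀, hh₀⟩ := hdom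
  have hmem : Summable fun γ => φ γ ⟪a, e γ⟫ :=
    Summable.of_nonneg_of_le (fun γ => hφ₀ γ _)
      (fun γ => (le_add_of_nonneg_left (sq_nonneg _)).trans (hle h₀ γ))
      ((hasSum_inner_sq e (h₀ - v)).summable.add hh₀)
  exact ⟨hmem, fun h hh => hasSum_le (hle h) ((hasSum_inner_sq e (a - v)).add hmem.hasSum)
    ((hasSum_inner_sq e (h - v)).add hh.hasSum)⟩

theorem isProximalLandweberStep_of_coordinatewise [CompleteSpace H] {H' : Type*}
    [NormedAddCommGroup H'] [InnerProductSpace ℝ H'] [CompleteSpace H'] {K : H →L[ℝ] H'}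
    {g : H'} {S : Γ → ℝ → ℝ} {T : H → H} (hφ₀ : ∀ γ t, 0 ≤ φ γ t)
    (hdom : (separableDomain e φ).Nonempty)
    (hS : ∀ γ b t, S γ b ^ 2 - 2 * b * S γ b + φ γ (S γ b) ≤ t ^ 2 - 2 * b * t + φ γ t)
    (hT : ∀ f γ, ⟪T f, e γ⟫ = S γ ⟪landweberStep K g f, e γ⟫) (f : H) :
    IsProximalLandweberStep K g (separablePenalty e φ) (separableDomain e φ) f (T f) :=
  mem_separableDomain_and_isMinOn_of_coordinatewise hφ₀ hdom fun γ t => by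
    rw [hT]
    exact hS γ _ t

theorem isBounded_sublevel_penalizedLeastSquares {F : Type*} [SeminormedAddCommGroup F]
    [NormedSpace ℝ F] {K : H →L[ℝ] F} {g : F} (hφ₀ : ∀ γ t, 0 ≤ φ γ t)
    (hcoercive : ∀ M, ∃ C, ∀ γ t, φ γ t ≤ M → t ^ 2 ≤ C * φ γ t) (M : ℝ) :
    Bornology.IsBounded {f ∈ separableDomain e φ |
      penalizedLeastSquares K g (separablePenalty e φ) f ≤ M} := by
  obtain ⟨C, hC⟩ := hcoercive M
  refine (Metric.isBounded_closedBall (x := 0) (r := √(|C| * M))).subset ?_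
  rintro f ⟨hf, hfM⟩
  have hM : separablePenalty e φ f ≤ M := (le_add_of_nonneg_left (sq_nonneg _)).trans hfM
  refine mem_closedBall_zero_iff.2 (Real.le_sqrt_of_sq_le ?_)
  calc ‖f‖ ^ 2 ≤ C * separablePenalty e φ f :=
        hasSum_le (fun γ => hC γ _ ((hf.le_tsum γ fun δ _ => hφ₀ δ _).trans hM))
          (hasSum_inner_sq e f) (hf.hasSum.mul_left C)
    _ ≤ |C| * M :=
        mul_le_mul (le_abs_self C) hM (separablePenalty_nonneg hφ₀ f) (abs_nonneg C)

end SeparablePenalty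

section WeightedPower

theorem convexOn_norm_rpow {E : Type*} [SeminormedAddCommGroup E] [NormedSpace ℝ E] {p : ℝ}
    (hp : 1 ≤ p) : ConvexOn ℝ Set.univ fun x : E => ‖x‖ ^ p := by
  refine ⟨convex_univ, fun x hx y hy s t hs ht hst => ?_⟩
  exact (Real.rpow_le_rpow (norm_nonneg _) (convexOn_univ_norm.2 hx hy hs ht hst)
    (zero_le_one.trans hp)).trans
    ((convexOn_rpow hp).2 (norm_nonneg x) (norm_nonneg y) hs ht hst)

theorem strictConvexOn_norm_rpow {E : Type*} [NormedAddCommGroup E] [NormedSpace ℝ E]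
    [StrictConvexSpace ℝ E] {p : ℝ} (hp : 1 < p) :
    StrictConvexOn ℝ Set.univ fun x : E => ‖x‖ ^ p := by
  refine ⟨convex_univ, fun x hx y hy hxy s t hs ht hst => ?_⟩
  rcases eq_or_ne ‖x‖ ‖y‖ with hnorm | hnorm
  · calc ‖s • x + t • y‖ ^ p < ‖y‖ ^ p :=
          Real.rpow_lt_rpow (norm_nonneg _)
            (norm_combo_lt_of_ne hnorm.le le_rfl hxy hs ht hst) (zero_lt_one.trans hp)
      _ = s • ‖x‖ ^ p + t • ‖y‖ ^ p := by rw [hnorm, ← add_smul, hst, one_smul]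
  · exact (Real.rpow_le_rpow (norm_nonneg _) (convexOn_univ_norm.2 hx hy hs.le ht.le hst)
      (zero_lt_one.trans hp).le).trans_lt
      ((strictConvexOn_rpow hp).2 (norm_nonneg x) (norm_nonneg y) hnorm hs ht hst)

theorem sq_le_mul_rpow {x p R : ℝ} (hx : 0 ≤ x) (hp₁ : 1 ≤ p) (hp₂ : p ≤ 2) (hR : 1 ≤ R)
    (h : x ^ p ≤ R) : x ^ 2 ≤ R * x ^ p := by
  rcases le_total x 1 with hx₁ | hx₁
  · calc x ^ 2 = x ^ (2 : ℝ) := (Real.rpow_two x).symm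
      _ ≤ x ^ p := Real.rpow_le_rpow_of_exponent_ge' hx hx₁ (zero_le_one.trans hp₁) hp₂
      _ ≤ R * x ^ p := le_mul_of_one_le_left (Real.rpow_nonneg hx p) hR
  · have hxp : x ≤ x ^ p := Real.self_le_rpow_of_one_le hx₁ hp₁
    calc x ^ 2 = x * x := sq x
      _ ≤ R * x ^ p := mul_le_mul (hxp.trans h) hxp hx (zero_le_one.trans hR)

variable {Γ : Type*} {w p : Γ → ℝ}

/-- The coordinate penalties `t ↦ w γ |t| ^ p γ` of the weighted `ℓᵖ` functional whose exponent
may depend on the coordinate. -/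
noncomputable def weightedPower (w p : Γ → ℝ) (γ : Γ) (t : ℝ) : ℝ :=
  w γ * |t| ^ p γ

theorem weightedPower_nonneg (hw : ∀ γ, 0 ≤ w γ) (γ : Γ) (t : ℝ) : 0 ≤ weightedPower w p γ t :=
  mul_nonneg (hw γ) (by positivity)

theorem continuous_weightedPower (hp : ∀ γ, 0 ≤ p γ) (γ : Γ) : Continuous (weightedPower w p γ) :=
  continuous_const.mul (continuous_abs.rpow_const fun _ => Or.inr (hp γ))

theorem convexOn_weightedPower (hw : ∀ γ, 0 ≤ w γ) (hp : ∀ γ, 1 ≤ p γ) (γ : Γ) :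
    ConvexOn ℝ Set.univ (weightedPower w p γ) :=
  (convexOn_norm_rpow (hp γ)).smul (hw γ)

theorem strictConvexOn_weightedPower (hw : ∀ γ, 0 < w γ) (hp : ∀ γ, 1 < p γ) (γ : Γ) :
    StrictConvexOn ℝ Set.univ (weightedPower w p γ) := by
  refine ⟨convex_univ, fun x hx y hy hxy s t hs ht hst => ?_⟩
  calc w γ * |s • x + t • y| ^ p γ < w γ * (s • |x| ^ p γ + t • |y| ^ p γ) :=
        mul_lt_mul_of_pos_left ((strictConvexOn_norm_rpow (hp γ)).2 hx hy hxy hs ht hst) (hw γ)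
    _ = s • (w γ * |x| ^ p γ) + t • (w γ * |y| ^ p γ) := by
        rw [mul_add, mul_smul_comm, mul_smul_comm]

theorem exists_sq_le_mul_weightedPower {c : ℝ} (hc : 0 < c) (hw : ∀ γ, c ≤ w γ)
    (hp : ∀ γ, 1 ≤ p γ ∧ p γ ≤ 2) (M : ℝ) :
    ∃ C, ∀ γ t, weightedPower w p γ t ≤ M → t ^ 2 ≤ C * weightedPower w p γ t := by
  refine ⟨max 1 (M / c) / c, fun γ t ht => ?_⟩
  have hle : |t| ^ p γ ≤ weightedPower w p γ t / c := by
    rw [le_div_iff₀' hc]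
    exact mul_le_mul_of_nonneg_right (hw γ) (by positivity)
  have hR : |t| ^ p γ ≤ max 1 (M / c) :=
    (hle.trans (by gcongr)).trans (le_max_right _ _)
  calc t ^ 2 = |t| ^ 2 := (sq_abs t).symm
    _ ≤ max 1 (M / c) * |t| ^ p γ :=
        sq_le_mul_rpow (abs_nonneg t) (hp γ).1 (hp γ).2 (le_max_left _ _) hR
    _ ≤ max 1 (M / c) * (weightedPower w p γ t / c) := by gcongr
    _ = max 1 (M / c) / c * weightedPower w p γ t := by ring

theorem zero_mem_separableDomain_weightedPower {H : Type*} [NormedAddCommGroup H]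
    [InnerProductSpace ℝ H] {e : Γ → H} (hp : ∀ γ, p γ ≠ 0) :
    0 ∈ separableDomain e (weightedPower w p) := by
  simp [separableDomain, weightedPower, Real.zero_rpow (hp _), summable_zero]

end WeightedPower

theorem stmt_15_general
    {H H' : Type*} [NormedAddCommGroup H] [InnerProductSpace ℝ H] [CompleteSpace H]
    [NormedAddCommGroup H'] [InnerProductSpace ℝ H'] [CompleteSpace H']
    {Γ : Type*}
    (e : HilbertBasis Γ ℝ H)
    (K : H →L[ℝ] H') (hK : ‖K‖ ^ 2 < 2)
    (w : Γ → ℝ) (c : ℝ) (hc : 0 < c) (hw : ∀ γ, c ≤ w γ)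
    (p : Γ → ℝ) (hp : ∀ γ, 1 ≤ p γ ∧ p γ ≤ 2)
    (g : H')
    (Φ : H → ℝ≥0∞)
    (hΦ : ∀ f, Φ f = ENNReal.ofReal (‖K f - g‖ ^ 2) +
      ∑' γ, ENNReal.ofReal (w γ * |⟪f, e γ⟫| ^ (p γ)))
    (S : Γ → ℝ → ℝ)
    (hS : ∀ (γ : Γ) (b x : ℝ),
      (S γ b) ^ 2 - 2 * b * S γ b + w γ * |S γ b| ^ (p γ) ≤
        x ^ 2 - 2 * b * x + w γ * |x| ^ (p γ))
    (T : H → H)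
    (hT : ∀ (f : H) (γ : Γ),
      ⟪T f, e γ⟫ = S γ ⟪f + (ContinuousLinearMap.adjoint K) (g - K f), e γ⟫)
    (fseq : ℕ → H)
    (hstep : ∀ n, fseq (n + 1) = T (fseq n)) :
    (∃ fstar : H,
      (∀ y : H, Tendsto (fun n => ⟪fseq n, y⟫) atTop (𝓝 ⟪fstar, y⟫)) ∧
      ∀ f : H, Φ fstar ≤ Φ f) ∧
    ((Function.Injective K ∨ ∀ γ, 1 < p γ) → ∃! fm : H, ∀ f : H, Φ fm ≤ Φ f) := by
  have hw₀ : ∀ γ, 0 < w γ := fun γ => hc.trans_le (hw γ)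
  have hp₀ : ∀ γ, 0 < p γ := fun γ => zero_lt_one.trans_le (hp γ).1
  have hφ₀ : ∀ γ t, 0 ≤ weightedPower w p γ t := weightedPower_nonneg fun γ => (hw₀ γ).le
  have hdom : (separableDomain e (weightedPower w p)).Nonempty :=
    ⟨0, zero_mem_separableDomain_weightedPower fun γ => (hp₀ γ).ne'⟩
  have hψ := convexOn_separablePenalty (e := e) hφ₀
    (convexOn_weightedPower (fun γ => (hw₀ γ).le) fun γ => (hp γ).1)
  have hclosed := isClosed_sublevel_penalizedLeastSquares (e := e) (K := K) (g := g) hφ₀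
    (continuous_weightedPower fun γ => (hp₀ γ).le)
  have hexists := exists_isMinOn_of_quasiconvexOn hdom
    (convexOn_penalizedLeastSquares hψ).quasiconvexOn hclosed
    (isBounded_sublevel_penalizedLeastSquares hφ₀ (exists_sq_le_mul_weightedPower hc hw hp))
  obtain ⟨a, ha, hamin, hlim⟩ := exists_isMinOn_tendsto_of_isProximalLandweberStep hK hψ hclosed
    hexists fun n => hstep n ▸ isProximalLandweberStep_of_coordinatewise hφ₀ hdom hS hT (fseq n)
  simp only [forall_le_iff_isMinOn_separableDomain hφ₀ hdom hΦ]
  refine ⟨⟨a, fun y => ((continuous_inner_toWeakSpace_symm y).tendsto _).comp hlim, ha, hamin⟩,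
    fun hstrict => ⟨a, ⟨ha, hamin⟩, fun b hb => ?_⟩⟩
  have hJ : StrictConvexOn ℝ (separableDomain e (weightedPower w p))
      (penalizedLeastSquares K g (separablePenalty e (weightedPower w p))) :=
    hstrict.elim (strictConvexOn_penalizedLeastSquares_of_injective · hψ) fun hp₁ =>
      strictConvexOn_penalizedLeastSquares
        (strictConvexOn_separablePenalty hφ₀ (strictConvexOn_weightedPower hw₀ hp₁))
  exact hJ.eq_of_isMinOn hb.2 hamin hb.1 ha

/-- Weak convergence theorem: the iterates `f^{n+1} = T(f^n)` converge weakly to a minimizer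
of `Φ`; if moreover `K` is injective or all `p γ > 1`, the minimizer of `Φ` is unique. -/
theorem stmt_15
    {H H' : Type*} [NormedAddCommGroup H] [InnerProductSpace ℝ H] [CompleteSpace H]
    [NormedAddCommGroup H'] [InnerProductSpace ℝ H'] [CompleteSpace H']
    {Γ : Type*} [Countable Γ]
    (e : HilbertBasis Γ ℝ H)
    (K : H →L[ℝ] H') (hK : ‖K‖ < 1)
    (w : Γ → ℝ) (c : ℝ) (hc : 0 < c) (hw : ∀ γ, c ≤ w γ)
    (p : Γ → ℝ) (hp : ∀ γ, 1 ≤ p γ ∧ p γ ≤ 2)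
    (g : H')
    (Φ : H → ℝ≥0∞)
    (hΦ : ∀ f, Φ f = ENNReal.ofReal (‖K f - g‖ ^ 2) +
      ∑' γ, ENNReal.ofReal (w γ * |⟪f, e γ⟫| ^ (p γ)))
    (S : Γ → ℝ → ℝ)
    (hS : ∀ (γ : Γ) (b x : ℝ),
      (S γ b) ^ 2 - 2 * b * S γ b + w γ * |S γ b| ^ (p γ) ≤
        x ^ 2 - 2 * b * x + w γ * |x| ^ (p γ))
    (T : H → H)
    (hT : ∀ (f : H) (γ : Γ),
      ⟪T f, e γ⟫ = S γ ⟪f + (ContinuousLinearMap.adjoint K) (g - K f), e γ⟫)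
    (fseq : ℕ → H)
    (hstep : ∀ n, fseq (n + 1) = T (fseq n)) :
    (∃ fstar : H,
      (∀ y : H, Filter.Tendsto (fun n => ⟪fseq n, y⟫) Filter.atTop (nhds ⟪fstar, y⟫)) ∧
      ∀ f : H, Φ fstar ≤ Φ f) ∧
    ((Function.Injective K ∨ ∀ γ, 1 < p γ) → ∃! fm : H, ∀ f : H, Φ fm ≤ Φ f) :=
  stmt_15_general e K (by nlinarith [norm_nonneg K]) w c hc hw p hp g Φ hΦ S hS T hT fseq hstep
end

section
/- Let H and H' be real Hilbert spaces, (e_γ)_{γ∈Γ} an orthonormal (Hilbert) basis of H indexed by a countable set Γ, and K : H → H' a bounded linear operator with ‖K‖ < 1. Let Γ = Γ₁ ∪ … ∪ Γ_n be a partition into finitely many nonempty sets, let (w_γ)_{γ∈Γ} be weights with w_γ ≥ c for a fixed c > 0, and let p₁, …, p_n ∈ [1,2]; write p_γ = p_i for γ ∈ Γ_i and N(f) = Σ_γ w_γ |⟨f, e_γ⟩|^{p_γ}. Assume either K is injective or p_i > 1 for every i. For α = (α₁, …, α_n) with all α_i > 0 and g ∈ H', the functional Φ_{α;g}(f) = ‖Kf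 − g‖² + Σ_{i=1}^n α_i Σ_{γ∈Γ_i} w_γ |⟨f, e_γ⟩|^{p_i} has a unique minimizer f*_{α;g} ∈ H. Let f₀ ∈ H, S = { f : Kf = Kf₀ }, assume there exists f ∈ S with N(f) < ∞, and let f† be the unique element of S with N(f†) ≤ N(f) for all f ∈ S. Let α_i : (0, ∞) → (0, ∞) for 1 ≤ i ≤ n satisfy, as ε → 0: α_i(ε) → 0, ε²/α_i(ε) → 0, and α_i(ε)/α_j(ε) → 1 for all i, j. Then lim_{ε→0} sup { ‖f*_{α(ε);g} − f†‖ : g ∈ H', ‖g − Kf₀‖ < ε } = 0. -/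
open scoped RealInnerProductSpace ENNReal

/-!
The functional `Φ` is weakly lower semicontinuous and coercive, because `q ≤ 2` and `c ≤ w` bound
`‖f‖ ^ 2` by a function of the penalty; hence it has a minimizer, which strict convexity makes
unique.

For the limit, compare the minimizer `f*` with `f†`. If `L ≤ α_i ≤ U`, then
`‖K f* - g‖ ^ 2 + L * N f* ≤ ε ^ 2 + U * N f†`, so `K f* → K f†` and
`N f* ≤ ε ^ 2 / L + (U / L) * N f† → N f†`. Every weak limit of the `f*` is therefore an
`N`-minimal solution, i.e. equals `f†`, and the convergence is strong because `N` has the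
Radon–Riesz property: weak convergence together with convergence of the penalties forces norm
convergence. Uniformity in the data `g` comes from letting `(ε, g)` vary jointly along one filter.
-/

open Filter Topology

section Sums

theorem tsum_le_liminf_tsum {ι Γ : Type*} {l : Filter ι} {u : ι → Γ → ℝ≥0∞} {v : Γ → ℝ≥0∞}
    (h : ∀ γ, Tendsto (u · γ) l (𝓝 (v γ))) : ∑' γ, v γ ≤ liminf (fun k => ∑' γ, u k γ) l :=
  have hlsc : LowerSemicontinuous fun v : Γ → ℝ≥0∞ => ∑' γ, v γ :=
    lowerSemicontinuous_tsum fun γ => (continuous_apply γ).lowerSemicontinuous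
  (hlsc.le_liminf v).trans (liminf_le_liminf_of_le (tendsto_pi_nhds.2 h))

theorem tendsto_tsum_zero_of_le_of_tendsto_tsum {ι Γ : Type*} {l : Filter ι} [l.NeBot]
    {u v : ι → Γ → ℝ≥0∞} {b : Γ → ℝ≥0∞} (huv : ∀ k γ, u k γ ≤ v k γ)
    (hu : ∀ γ, Tendsto (u · γ) l (𝓝 0)) (hv : ∀ γ, Tendsto (v · γ) l (𝓝 (b γ)))
    (hsum : Tendsto (fun k => ∑' γ, v k γ) l (𝓝 (∑' γ, b γ))) (hb : ∑' γ, b γ ≠ ⊤) :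
    Tendsto (fun k => ∑' γ, u k γ) l (𝓝 0) := by
  have hdiff (γ : Γ) : Tendsto (fun k => v k γ - u k γ) l (𝓝 (b γ)) := by
    simpa using ENNReal.Tendsto.sub (hv γ) (hu γ) (Or.inr ENNReal.zero_ne_top)
  have hsum_diff : Tendsto (fun k => ∑' γ, (v k γ - u k γ)) l (𝓝 (∑' γ, b γ)) := by
    refine tendsto_of_le_liminf_of_limsup_le (tsum_le_liminf_tsum hdiff) ?_
    rw [← hsum.limsup_eq]
    exact limsup_le_limsup <| Eventually.of_forall fun k =>
      ENNReal.tsum_le_tsum fun γ => tsub_le_self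
  have hlim := ENNReal.Tendsto.sub hsum hsum_diff (Or.inl hb)
  rw [tsub_self] at hlim
  refine hlim.congr' ?_
  filter_upwards [hsum.eventually_lt_const hb.lt_top] with k hk
  have hle : ∑' γ, (v k γ - u k γ) ≤ ∑' γ, v k γ := ENNReal.tsum_le_tsum fun γ => tsub_le_self
  refine ENNReal.sub_eq_of_eq_add_rev (hle.trans_lt hk).ne ?_
  rw [← ENNReal.tsum_add]
  exact tsum_congr fun γ => (tsub_add_cancel_of_le (huv k γ)).symm

end Sums

section NormPowers

variable {E : Type*} [NormedAddCommGroup E] {q : ℝ}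

theorem enorm_rpow_eq_ofReal (a : E) (hq : 0 ≤ q) : ‖a‖ₑ ^ q = ENNReal.ofReal (‖a‖ ^ q) := by
  rw [← ofReal_norm, ENNReal.ofReal_rpow_of_nonneg (norm_nonneg a) hq]

theorem enorm_sub_rpow_le_two_mul_add (a b : E) (hq : 1 ≤ q) (hq' : q ≤ 2) :
    ‖a - b‖ₑ ^ q ≤ 2 * (‖a‖ₑ ^ q + ‖b‖ₑ ^ q) :=
  calc ‖a - b‖ₑ ^ q ≤ (‖a‖ₑ + ‖b‖ₑ) ^ q := ENNReal.rpow_le_rpow enorm_sub_le (by linarith)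
    _ ≤ 2 ^ (q - 1) * (‖a‖ₑ ^ q + ‖b‖ₑ ^ q) := ENNReal.rpow_add_le_mul_rpow_add_rpow _ _ hq
    _ ≤ 2 * (‖a‖ₑ ^ q + ‖b‖ₑ ^ q) := by
      gcongr
      simpa using ENNReal.rpow_le_rpow_of_exponent_le one_le_two (by linarith : q - 1 ≤ 1)

theorem sq_le_rpow_add_rpow_sq (t : ℝ≥0∞) (hq : 1 ≤ q) (hq' : q ≤ 2) :
    t ^ 2 ≤ t ^ q + (t ^ q) ^ 2 := by
  rcases le_total t 1 with ht | ht
  · refine le_add_of_le_left ?_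
    rw [← ENNReal.rpow_two]
    exact ENNReal.rpow_le_rpow_of_exponent_ge ht hq'
  · refine le_add_of_le_right (pow_le_pow_left' ?_ 2)
    simpa using ENNReal.rpow_le_rpow_of_exponent_le ht hq

theorem tendsto_zero_of_tendsto_enorm_sq {X : Type*} {l : Filter X} {x : X → E}
    (h : Tendsto (fun k => ‖x k‖ₑ ^ 2) l (𝓝 0)) : Tendsto x l (𝓝 0) := by
  rw [tendsto_zero_iff_enorm_tendsto_zero]
  simpa only [ENNReal.pow_rpow_inv_natCast two_ne_zero, ENNReal.zero_rpow_of_pos, Nat.cast_pos,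
    inv_pos, Nat.ofNat_pos] using h.ennrpow_const ((2 : ℕ) : ℝ)⁻¹

variable [NormedSpace ℝ E]

theorem norm_midpoint_le (a b : E) : ‖midpoint ℝ a b‖ ≤ 1 / 2 * ‖a‖ + 1 / 2 * ‖b‖ := by
  rw [midpoint_eq_smul_add, norm_smul, ← mul_add, invOf_eq_inv, norm_inv, Real.norm_ofNat, one_div]
  exact mul_le_mul_of_nonneg_left (norm_add_le a b) (by norm_num)

theorem norm_midpoint_rpow_le (a b : E) (hq : 1 ≤ q) :
    ‖midpoint ℝ a b‖ ^ q ≤ 1 / 2 * ‖a‖ ^ q + 1 / 2 * ‖b‖ ^ q :=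
  (Real.rpow_le_rpow (norm_nonneg _) (norm_midpoint_le a b) (by linarith)).trans <|
    (convexOn_rpow hq).2 (norm_nonneg a) (norm_nonneg b) one_half_pos.le one_half_pos.le
      (add_halves 1)

theorem norm_midpoint_rpow_lt [StrictConvexSpace ℝ E] {a b : E} (hab : a ≠ b) (hq : 1 < q) :
    ‖midpoint ℝ a b‖ ^ q < 1 / 2 * ‖a‖ ^ q + 1 / 2 * ‖b‖ ^ q := by
  have hq₀ : 0 < q := by linarith
  by_cases hnorm : ‖a‖ = ‖b‖
  · have hlt : ‖midpoint ℝ a b‖ < ‖a‖ := by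
      simpa [midpoint_eq_smul_add] using (norm_midpoint_lt_iff hnorm).2 hab
    rw [← hnorm, ← add_mul, add_halves, one_mul]
    exact Real.rpow_lt_rpow (norm_nonneg _) hlt hq₀
  · exact (Real.rpow_le_rpow (norm_nonneg _) (norm_midpoint_le a b) hq₀.le).trans_lt <|
      (strictConvexOn_rpow hq).2 (norm_nonneg a) (norm_nonneg b) hnorm one_half_pos one_half_pos
        (add_halves 1)

theorem two_mul_enorm_midpoint_rpow_le (a b : E) (hq : 1 ≤ q) :
    2 * ‖midpoint ℝ a b‖ₑ ^ q ≤ ‖a‖ₑ ^ q + ‖b‖ₑ ^ q := by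
  have hq₀ : 0 ≤ q := by linarith
  simp only [enorm_rpow_eq_ofReal _ hq₀]
  rw [← ENNReal.ofReal_add (by positivity) (by positivity), ← ENNReal.ofReal_ofNat 2,
    ← ENNReal.ofReal_mul zero_le_two]
  exact ENNReal.ofReal_le_ofReal (by linarith [norm_midpoint_rpow_le a b hq])

theorem two_mul_enorm_midpoint_rpow_lt [StrictConvexSpace ℝ E] {a b : E} (hab : a ≠ b)
    (hq : 1 < q) : 2 * ‖midpoint ℝ a b‖ₑ ^ q < ‖a‖ₑ ^ q + ‖b‖ₑ ^ q := by
  have hq₀ : 0 ≤ q := by linarith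
  have hlt := norm_midpoint_rpow_lt hab hq
  have hpos : 0 ≤ ‖midpoint ℝ a b‖ ^ q := by positivity
  simp only [enorm_rpow_eq_ofReal _ hq₀]
  rw [← ENNReal.ofReal_add (by positivity) (by positivity), ← ENNReal.ofReal_ofNat 2,
    ← ENNReal.ofReal_mul zero_le_two, ENNReal.ofReal_lt_ofReal_iff] <;> linarith

end NormPowers

section WeakTopology

section Normed

variable {E : Type*} [NormedAddCommGroup E] [NormedSpace ℝ E]

theorem isClosed_toWeakSpace_symm_preimage {s : Set E} (hconv : Convex ℝ s) (hs : IsClosed s) :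
    IsClosed ((toWeakSpace ℝ E).symm ⁻¹' s) := by
  rw [← LinearEquiv.image_eq_preimage_symm, ← closure_eq_iff_isClosed,
    ← hconv.toWeakSpace_closure ℝ, hs.closure_eq]

theorem lowerSemicontinuous_enorm_toWeakSpace_symm :
    LowerSemicontinuous fun x : WeakSpace ℝ E => ‖(toWeakSpace ℝ E).symm x‖ₑ := by
  refine lowerSemicontinuous_iff_isClosed_preimage.2 fun t => ?_
  have hball : {x : E | ‖x‖ₑ ≤ t} = Metric.closedEBall 0 t := by ext; simp
  exact isClosed_toWeakSpace_symm_preimage (s := {x : E | ‖x‖ₑ ≤ t})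
    (hball ▸ convex_closedEBall 0 t) (hball ▸ Metric.isClosed_closedEBall)

theorem continuous_weakSpace_dual_apply (φ : StrongDual ℝ E) :
    Continuous fun x : WeakSpace ℝ E => φ ((toWeakSpace ℝ E).symm x) :=
  WeakBilin.eval_continuous (topDualPairing ℝ E).flip φ

theorem apply_eq_of_tendsto_toWeakSpace {F X : Type*} [NormedAddCommGroup F] [NormedSpace ℝ F]
    {K : E →L[ℝ] F} {l : Filter X} [l.NeBot] {x : X → E}
    {z : E} {b : F} (hx : Tendsto (fun k => toWeakSpace ℝ E (x k)) l (𝓝 (toWeakSpace ℝ E z)))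
    (hK : Tendsto (fun k => K (x k)) l (𝓝 b)) : K z = b :=
  (toWeakSpace ℝ F).injective <| tendsto_nhds_unique
    (((WeakSpace.map K).continuous.tendsto _).comp hx)
    (((toWeakSpaceCLM ℝ F).continuous.tendsto b).comp hK)

end Normed

variable {H : Type*} [NormedAddCommGroup H] [InnerProductSpace ℝ H]

theorem tendsto_inner_of_tendsto_toWeakSpace {X : Type*} {l : Filter X} {x : X → H} {z : H}
    (hx : Tendsto (fun k => toWeakSpace ℝ H (x k)) l (𝓝 (toWeakSpace ℝ H z))) (v : H) :
    Tendsto (fun k => ⟪x k, v⟫) l (𝓝 ⟪z, v⟫) := by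
  simpa [Function.comp_def, real_inner_comm] using
    ((continuous_weakSpace_dual_apply (innerSL ℝ v)).tendsto _).comp hx

theorem surjective_inclusionInDoubleDualWeak [CompleteSpace H] :
    Function.Surjective (NormedSpace.inclusionInDoubleDualWeak ℝ H) := by
  intro Ψ
  let riesz := InnerProductSpace.toDual ℝ H
  let φ : StrongDual ℝ H := (WeakDual.toStrongDual Ψ).comp (innerSL ℝ)
  refine ⟨toWeakSpace ℝ H (riesz.symm φ), DFunLike.ext _ _ fun ψ => ?_⟩
  obtain ⟨v, rfl⟩ := riesz.surjective ψ
  calc ⟪v, riesz.symm φ⟫ = ⟪riesz.symm φ, v⟫ := real_inner_comm _ _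
    _ = φ v := InnerProductSpace.toDual_symm_apply

theorem isCompact_toWeakSpace_symm_preimage_closedBall [CompleteSpace H] (r : ℝ) :
    IsCompact ((toWeakSpace ℝ H).symm ⁻¹' Metric.closedBall 0 r) := by
  have hclosed : IsClosed ((toWeakSpace ℝ H).symm ⁻¹' Metric.closedBall 0 r) :=
    isClosed_toWeakSpace_symm_preimage (convex_closedBall 0 r) Metric.isClosed_closedBall
  rw [← hclosed.closure_eq]
  refine NormedSpace.isCompact_closure_of_isBounded ℝ H _ ?_ ?_
  · simpa [Set.preimage_preimage] using Metric.isBounded_closedBall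
  · rw [surjective_inclusionInDoubleDualWeak.range_eq]
    exact Set.subset_univ _

theorem exists_tendsto_toWeakSpace_of_eventually_norm_le [CompleteSpace H] {X : Type*}
    {V : Ultrafilter X} {x : X → H} {r : ℝ} (hx : ∀ᶠ k in V, ‖x k‖ ≤ r) :
    ∃ z, Tendsto (fun k => toWeakSpace ℝ H (x k)) V (𝓝 (toWeakSpace ℝ H z)) := by
  have hball : ∀ᶠ k in V,
      toWeakSpace ℝ H (x k) ∈ (toWeakSpace ℝ H).symm ⁻¹' Metric.closedBall 0 r := by
    simpa using hx
  obtain ⟨z, -, hz⟩ := (isCompact_toWeakSpace_symm_preimage_closedBall r).ultrafilter_le_nhds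
    (V.map fun k => toWeakSpace ℝ H (x k)) (tendsto_principal.2 hball)
  exact ⟨(toWeakSpace ℝ H).symm z, hz⟩

end WeakTopology

section Coefficients

variable {H Γ : Type*} [NormedAddCommGroup H] [InnerProductSpace ℝ H]

theorem inner_midpoint (f g v : H) : ⟪midpoint ℝ f g, v⟫ = midpoint ℝ ⟪f, v⟫ ⟪g, v⟫ := by
  simp only [midpoint_eq_smul_add, inner_smul_left, inner_add_left, smul_eq_mul, conj_trivial]

theorem exists_inner_ne (e : HilbertBasis Γ ℝ H) {f g : H} (hfg : f ≠ g) :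
    ∃ γ, ⟪f, e γ⟫ ≠ ⟪g, e γ⟫ := by
  contrapose! hfg
  refine e.repr.injective (lp.ext (funext fun γ => ?_))
  rw [e.repr_apply_apply, e.repr_apply_apply, real_inner_comm, hfg, real_inner_comm]

theorem tsum_enorm_inner_sq (e : HilbertBasis Γ ℝ H) (f : H) :
    ∑' γ, ‖⟪f, e γ⟫‖ₑ ^ 2 = ‖f‖ₑ ^ 2 := by
  have hsum := e.hasSum_inner_mul_inner f f
  have hterm (γ : Γ) : ⟪f, e γ⟫ * ⟪e γ, f⟫ = ‖⟪f, e γ⟫‖ ^ 2 := by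
    rw [real_inner_comm f, ← pow_two, Real.norm_eq_abs, sq_abs]
  simp only [hterm, real_inner_self_eq_norm_sq] at hsum
  simp only [← ofReal_norm, ← ENNReal.ofReal_pow (norm_nonneg _)]
  rw [← hsum.tsum_eq, ENNReal.ofReal_tsum_of_nonneg (fun γ => by positivity) hsum.summable]

end Coefficients

/-- The sparsity penalty `N f = ∑ w_γ |⟨f, e_γ⟩| ^ q_γ` on the coefficients of `f` in the basis `e`.
The exponents form a family over the basis index set, and negative weights count as `0`. -/
noncomputable def coeffPenalty {H Γ : Type*} [NormedAddCommGroup H] [InnerProductSpace ℝ H]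
    (e : HilbertBasis Γ ℝ H) (w q : Γ → ℝ) (f : H) : ℝ≥0∞ :=
  ∑' γ, ENNReal.ofReal (w γ) * ‖⟪f, e γ⟫‖ₑ ^ q γ

namespace coeffPenalty

variable {Γ H X : Type*} [NormedAddCommGroup H] [InnerProductSpace ℝ H]
  {e : HilbertBasis Γ ℝ H} {w q : Γ → ℝ} {c : ℝ} {l : Filter X} {x : X → H} {y : H}

theorem eq_tsum_ofReal (hq : ∀ γ, 0 ≤ q γ) (f : H) :
    coeffPenalty e w q f = ∑' γ, ENNReal.ofReal (w γ * |⟪f, e γ⟫| ^ q γ) := by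
  refine tsum_congr fun γ => ?_
  rw [ENNReal.ofReal_mul' (by positivity), enorm_rpow_eq_ofReal _ (hq γ), Real.norm_eq_abs]

theorem apply_zero (hq : ∀ γ, 0 < q γ) : coeffPenalty e w q 0 = 0 := by
  simp [coeffPenalty, hq]

theorem mono_weight {w' : Γ → ℝ} (h : ∀ γ, w γ ≤ w' γ) (f : H) :
    coeffPenalty e w q f ≤ coeffPenalty e w' q f :=
  ENNReal.tsum_le_tsum fun γ => by gcongr; exact h γ

theorem const_mul_weight {a : ℝ} (ha : 0 ≤ a) (f : H) :
    coeffPenalty e (fun γ => a * w γ) q f = ENNReal.ofReal a * coeffPenalty e w q f := by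
  simp only [coeffPenalty, ENNReal.ofReal_mul ha, mul_assoc, ENNReal.tsum_mul_left]

theorem two_mul_term_midpoint_le (hq : ∀ γ, 1 ≤ q γ) (f g : H) (γ : Γ) :
    2 * (ENNReal.ofReal (w γ) * ‖⟪midpoint ℝ f g, e γ⟫‖ₑ ^ q γ) ≤
      ENNReal.ofReal (w γ) * ‖⟪f, e γ⟫‖ₑ ^ q γ + ENNReal.ofReal (w γ) * ‖⟪g, e γ⟫‖ₑ ^ q γ := by
  rw [mul_left_comm, ← mul_add, inner_midpoint]
  exact mul_le_mul_right (two_mul_enorm_midpoint_rpow_le _ _ (hq γ)) _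

theorem two_mul_midpoint_le (hq : ∀ γ, 1 ≤ q γ) (f g : H) :
    2 * coeffPenalty e w q (midpoint ℝ f g) ≤ coeffPenalty e w q f + coeffPenalty e w q g := by
  rw [coeffPenalty, ← ENNReal.tsum_mul_left, coeffPenalty, coeffPenalty, ← ENNReal.tsum_add]
  exact ENNReal.tsum_le_tsum fun γ => two_mul_term_midpoint_le hq f g γ

theorem two_mul_midpoint_lt (hw : ∀ γ, 0 < w γ) (hq : ∀ γ, 1 < q γ) {f g : H} (hfg : f ≠ g)
    (hf : coeffPenalty e w q f ≠ ⊤) (hg : coeffPenalty e w q g ≠ ⊤) :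
    2 * coeffPenalty e w q (midpoint ℝ f g) < coeffPenalty e w q f + coeffPenalty e w q g := by
  obtain ⟨γ, hγ⟩ := exists_inner_ne e hfg
  have hfin : 2 * coeffPenalty e w q (midpoint ℝ f g) ≠ ⊤ :=
    ((two_mul_midpoint_le (fun γ => (hq γ).le) f g).trans_lt
      (ENNReal.add_lt_top.2 ⟨hf.lt_top, hg.lt_top⟩)).ne
  rw [coeffPenalty, ← ENNReal.tsum_mul_left] at hfin ⊢
  rw [coeffPenalty, coeffPenalty, ← ENNReal.tsum_add]
  refine ENNReal.tsum_lt_tsum hfin (two_mul_term_midpoint_le (fun γ => (hq γ).le) f g) (i := γ) ?_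
  rw [mul_left_comm, ← mul_add, inner_midpoint]
  exact ENNReal.mul_lt_mul_right (by simpa using hw γ) ENNReal.ofReal_ne_top
    (two_mul_enorm_midpoint_rpow_lt hγ (hq γ))

theorem lowerSemicontinuous_weakSpace :
    LowerSemicontinuous fun f : WeakSpace ℝ H => coeffPenalty e w q ((toWeakSpace ℝ H).symm f) := by
  refine lowerSemicontinuous_tsum fun γ => Continuous.lowerSemicontinuous ?_
  have hcoeff : Continuous fun f : WeakSpace ℝ H => ⟪(toWeakSpace ℝ H).symm f, e γ⟫ := by
    simpa only [real_inner_comm, innerSL_apply_apply] using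
      continuous_weakSpace_dual_apply (innerSL ℝ (e γ))
  exact (ENNReal.continuous_const_mul ENNReal.ofReal_ne_top).comp
    (ENNReal.continuous_rpow_const.comp hcoeff.enorm)

theorem enorm_sq_le (hc : 0 < c) (hw : ∀ γ, c ≤ w γ) (hq : ∀ γ, q γ ∈ Set.Icc 1 2) (f : H) :
    ‖f‖ₑ ^ 2 ≤ coeffPenalty e w q f / ENNReal.ofReal c +
      (coeffPenalty e w q f / ENNReal.ofReal c) ^ 2 := by
  set R := coeffPenalty e w q f / ENNReal.ofReal c
  have hR : ∑' γ, ‖⟪f, e γ⟫‖ₑ ^ q γ ≤ R := by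
    rw [ENNReal.le_div_iff_mul_le (by simp [hc]) (by simp), mul_comm, ← ENNReal.tsum_mul_left]
    exact ENNReal.tsum_le_tsum fun γ => by gcongr; exact hw γ
  calc ‖f‖ₑ ^ 2 = ∑' γ, ‖⟪f, e γ⟫‖ₑ ^ 2 := (tsum_enorm_inner_sq e f).symm
    _ ≤ ∑' γ, (‖⟪f, e γ⟫‖ₑ ^ q γ + R * ‖⟪f, e γ⟫‖ₑ ^ q γ) := ENNReal.tsum_le_tsum fun γ => by
      refine (sq_le_rpow_add_rpow_sq _ (hq γ).1 (hq γ).2).trans ?_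
      rw [pow_two (_ ^ q γ)]
      gcongr
      exact (ENNReal.le_tsum γ).trans hR
    _ ≤ R + R ^ 2 := by
      rw [ENNReal.tsum_add, ENNReal.tsum_mul_left, pow_two]
      gcongr

theorem exists_norm_le (hc : 0 < c) (hw : ∀ γ, c ≤ w γ) (hq : ∀ γ, q γ ∈ Set.Icc 1 2)
    {M : ℝ≥0∞} (hM : M ≠ ⊤) : ∃ r : ℝ, ∀ f, coeffPenalty e w q f ≤ M → ‖f‖ ≤ r := by
  have hfin : M / ENNReal.ofReal c + (M / ENNReal.ofReal c) ^ 2 ≠ ⊤ := by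
    have : M / ENNReal.ofReal c ≠ ⊤ := ENNReal.div_ne_top hM (by simp [hc])
    finiteness
  refine ⟨√(M / ENNReal.ofReal c + (M / ENNReal.ofReal c) ^ 2).toReal, fun f hf => ?_⟩
  refine Real.le_sqrt_of_sq_le ?_
  rw [← toReal_enorm, ← ENNReal.toReal_pow]
  exact ENNReal.toReal_mono hfin ((enorm_sq_le hc hw hq f).trans (by gcongr))

theorem tendsto_zero_of_tendsto_zero (hc : 0 < c) (hw : ∀ γ, c ≤ w γ)
    (hq : ∀ γ, q γ ∈ Set.Icc 1 2) (h : Tendsto (fun k => coeffPenalty e w q (x k)) l (𝓝 0)) :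
    Tendsto x l (𝓝 0) := by
  have hdiv : Tendsto (fun k => coeffPenalty e w q (x k) / ENNReal.ofReal c) l (𝓝 0) := by
    simpa using ENNReal.Tendsto.div_const h (Or.inr (by simpa using hc))
  exact tendsto_zero_of_tendsto_enorm_sq <| tendsto_of_tendsto_of_tendsto_of_le_of_le
    tendsto_const_nhds (by simpa using hdiv.add (ENNReal.Tendsto.pow (n := 2) hdiv))
    (fun _ => zero_le) fun k => enorm_sq_le hc hw hq (x k)

theorem tendsto_term {γ : Γ} (h : Tendsto (fun k => ⟪x k, e γ⟫) l (𝓝 ⟪y, e γ⟫)) :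
    Tendsto (fun k => ENNReal.ofReal (w γ) * ‖⟪x k, e γ⟫‖ₑ ^ q γ) l
      (𝓝 (ENNReal.ofReal (w γ) * ‖⟪y, e γ⟫‖ₑ ^ q γ)) :=
  ENNReal.Tendsto.const_mul (h.enorm.ennrpow_const _) (Or.inr ENNReal.ofReal_ne_top)

theorem le_liminf (h : ∀ γ, Tendsto (fun k => ⟪x k, e γ⟫) l (𝓝 ⟪y, e γ⟫)) :
    coeffPenalty e w q y ≤ liminf (fun k => coeffPenalty e w q (x k)) l :=
  tsum_le_liminf_tsum fun γ => tendsto_term (h γ)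

theorem tendsto_of_tendsto_inner_of_limsup_le [l.NeBot] (hc : 0 < c) (hw : ∀ γ, c ≤ w γ)
    (hq : ∀ γ, q γ ∈ Set.Icc 1 2) (hy : coeffPenalty e w q y ≠ ⊤)
    (hcoeff : ∀ γ, Tendsto (fun k => ⟪x k, e γ⟫) l (𝓝 ⟪y, e γ⟫))
    (hlimsup : limsup (fun k => coeffPenalty e w q (x k)) l ≤ coeffPenalty e w q y) :
    Tendsto x l (𝓝 y) := by
  have hpen := tendsto_of_le_liminf_of_limsup_le (le_liminf hcoeff) hlimsup
  let t (f : H) (γ : Γ) : ℝ≥0∞ := ENNReal.ofReal (w γ) * ‖⟪f, e γ⟫‖ₑ ^ q γ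
  -- `t (x k - y) ≤ 2 * (t (x k) + t y)`, and the sums of these majorants converge
  have hmajorant (f : H) : ∑' γ, 2 * (t f γ + t y γ) =
      2 * (coeffPenalty e w q f + coeffPenalty e w q y) := by
    rw [ENNReal.tsum_mul_left, ENNReal.tsum_add, coeffPenalty, coeffPenalty]
  have hdiff : Tendsto (fun k => coeffPenalty e w q (x k - y)) l (𝓝 0) := by
    refine tendsto_tsum_zero_of_le_of_tendsto_tsum (v := fun k γ => 2 * (t (x k) γ + t y γ))
      (b := fun γ => 2 * (t y γ + t y γ)) (fun k γ => ?_) (fun γ => ?_) (fun γ => ?_) ?_ ?_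
    · rw [inner_sub_left, ← mul_add, mul_left_comm]
      gcongr
      exact enorm_sub_rpow_le_two_mul_add _ _ (hq γ).1 (hq γ).2
    · have hγ : Tendsto (fun k => ⟪x k - y, e γ⟫) l (𝓝 ⟪(0 : H), e γ⟫) := by
        simpa [inner_sub_left] using (hcoeff γ).sub_const ⟪y, e γ⟫
      simpa [one_pos.trans_le (hq γ).1] using tendsto_term (w := w) (q := q) hγ
    · exact ENNReal.Tendsto.const_mul ((tendsto_term (hcoeff γ)).add_const _)
        (Or.inr ENNReal.ofNat_ne_top)
    · simp only [hmajorant]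
      exact ENNReal.Tendsto.const_mul (hpen.add_const _) (Or.inr ENNReal.ofNat_ne_top)
    · rw [hmajorant]
      finiteness
  simpa using (tendsto_zero_of_tendsto_zero hc hw hq hdiff).add_const y

end coeffPenalty

/-- The Tikhonov functional `Φ f = ‖K f - g‖ ^ 2 + N f` whose minimizers are the regularized
solutions of `K f = g`. The regularization parameters are absorbed into the weights `w`. -/
noncomputable def tikhonov {H F Γ : Type*} [NormedAddCommGroup H] [InnerProductSpace ℝ H]
    [NormedAddCommGroup F] [NormedSpace ℝ F] (K : H →L[ℝ] F) (e : HilbertBasis Γ ℝ H)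
    (w q : Γ → ℝ) (g : F) (f : H) : ℝ≥0∞ :=
  ‖K f - g‖ₑ ^ 2 + coeffPenalty e w q f

namespace tikhonov

variable {Γ H F : Type*} [NormedAddCommGroup H] [InnerProductSpace ℝ H]
  [NormedAddCommGroup F] [NormedSpace ℝ F] {K : H →L[ℝ] F}
  {e : HilbertBasis Γ ℝ H} {w q : Γ → ℝ} {g : F} {c : ℝ}

theorem lowerSemicontinuous_weakSpace :
    LowerSemicontinuous fun f : WeakSpace ℝ H => tikhonov K e w q g ((toWeakSpace ℝ H).symm f) := by
  have hresidual : LowerSemicontinuous fun f : WeakSpace ℝ H =>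
      ‖(toWeakSpace ℝ F).symm (WeakSpace.map K f - toWeakSpace ℝ F g)‖ₑ :=
    lowerSemicontinuous_enorm_toWeakSpace_symm.comp
      ((WeakSpace.map K).continuous.sub continuous_const)
  exact ((ENNReal.continuous_pow 2).comp_lowerSemicontinuous hresidual (pow_left_mono 2)).add
    coeffPenalty.lowerSemicontinuous_weakSpace

theorem eq_ofReal_add_tsum_ofReal (hq : ∀ γ, 0 ≤ q γ) (f : H) : tikhonov K e w q g f =
    ENNReal.ofReal (‖K f - g‖ ^ 2) + ∑' γ, ENNReal.ofReal (w γ * |⟪f, e γ⟫| ^ q γ) := by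
  rw [tikhonov, coeffPenalty.eq_tsum_ofReal hq, ENNReal.ofReal_pow (norm_nonneg _), ofReal_norm]

theorem apply_zero_ne_top (hq : ∀ γ, 0 < q γ) : tikhonov K e w q g 0 ≠ ⊤ := by
  simp [tikhonov, coeffPenalty.apply_zero hq]

theorem exists_forall_le (hc : 0 < c) (hw : ∀ γ, c ≤ w γ) (hq : ∀ γ, q γ ∈ Set.Icc 1 2) :
    ∃ f, ∀ f', tikhonov K e w q g f ≤ tikhonov K e w q g f' := by
  have : CompleteSpace H := e.repr.toIsometryEquiv.completeSpace
  have hq₀ (γ : Γ) : 0 < q γ := one_pos.trans_le (hq γ).1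
  obtain ⟨r, hr⟩ := coeffPenalty.exists_norm_le (e := e) hc hw hq
    (apply_zero_ne_top (K := K) (e := e) (w := w) (g := g) hq₀)
  have hzero : toWeakSpace ℝ H 0 ∈ (toWeakSpace ℝ H).symm ⁻¹' Metric.closedBall 0 r := by
    simpa using hr 0 (by simp [coeffPenalty.apply_zero hq₀])
  obtain ⟨f, -, hf⟩ := (lowerSemicontinuous_weakSpace (K := K) (e := e) (w := w) (q := q)
    (g := g)).lowerSemicontinuousOn _ |>.exists_isMinOn ⟨_, hzero⟩
    (isCompact_toWeakSpace_symm_preimage_closedBall r)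
  refine ⟨(toWeakSpace ℝ H).symm f, fun f' => ?_⟩
  rcases le_total (tikhonov K e w q g f') (tikhonov K e w q g 0) with hle | hle
  · exact hf (show toWeakSpace ℝ H f' ∈ _ by simpa using hr f' (le_add_self.trans hle))
  · exact (hf hzero).trans (by simpa using hle)

theorem residual_midpoint (K : H →L[ℝ] F) (g : F) (f f' : H) :
    K (midpoint ℝ f f') - g = midpoint ℝ (K f - g) (K f' - g) :=
  (K.toLinearMap.toAffineMap - AffineMap.const ℝ H g).map_midpoint f f'

theorem two_mul_midpoint_lt [StrictConvexSpace ℝ F] (hw : ∀ γ, 0 < w γ) (hq : ∀ γ, 1 ≤ q γ)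
    (hcase : Function.Injective K ∨ ∀ γ, 1 < q γ) {f f' : H} (hne : f ≠ f')
    (hf : tikhonov K e w q g f ≠ ⊤) (hf' : tikhonov K e w q g f' ≠ ⊤) :
    2 * tikhonov K e w q g (midpoint ℝ f f') < tikhonov K e w q g f + tikhonov K e w q g f' := by
  obtain ⟨hres, hpen⟩ := ENNReal.add_ne_top.1 hf
  obtain ⟨hres', hpen'⟩ := ENNReal.add_ne_top.1 hf'
  simp only [tikhonov, residual_midpoint, mul_add, ← ENNReal.rpow_two] at hres hres' ⊢
  rw [add_add_add_comm]
  rcases hcase with hK | hq'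
  · have hle := coeffPenalty.two_mul_midpoint_le (e := e) (w := w) hq f f'
    exact ENNReal.add_lt_add_of_lt_of_le (ne_top_of_le_ne_top (by finiteness) hle)
      (two_mul_enorm_midpoint_rpow_lt (fun h => hne (hK (sub_left_injective h))) one_lt_two) hle
  · have hle := two_mul_enorm_midpoint_rpow_le (K f - g) (K f' - g) one_le_two
    exact ENNReal.add_lt_add_of_le_of_lt (ne_top_of_le_ne_top (by finiteness) hle) hle
      (coeffPenalty.two_mul_midpoint_lt hw hq' hne hpen hpen')

theorem eq_of_forall_le [StrictConvexSpace ℝ F] (hw : ∀ γ, 0 < w γ) (hq : ∀ γ, 1 ≤ q γ)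
    (hcase : Function.Injective K ∨ ∀ γ, 1 < q γ) {f f' : H}
    (hf : ∀ h, tikhonov K e w q g f ≤ tikhonov K e w q g h)
    (hf' : ∀ h, tikhonov K e w q g f' ≤ tikhonov K e w q g h) : f = f' := by
  by_contra hne
  have hfin := apply_zero_ne_top (K := K) (e := e) (w := w) (g := g)
    fun γ => one_pos.trans_le (hq γ)
  refine (two_mul_midpoint_lt hw hq hcase hne (ne_top_of_le_ne_top hfin (hf 0))
    (ne_top_of_le_ne_top hfin (hf' 0))).not_ge ?_
  rw [two_mul]
  exact add_le_add (hf _) (hf' _)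

theorem existsUnique_forall_le [StrictConvexSpace ℝ F] (hc : 0 < c) (hw : ∀ γ, c ≤ w γ)
    (hq : ∀ γ, q γ ∈ Set.Icc 1 2) (hcase : Function.Injective K ∨ ∀ γ, 1 < q γ) :
    ∃! f, ∀ f', tikhonov K e w q g f ≤ tikhonov K e w q g f' := by
  obtain ⟨f, hf⟩ := exists_forall_le (K := K) (e := e) (g := g) hc hw hq
  exact ⟨f, hf, fun f' hf' =>
    eq_of_forall_le (fun γ => hc.trans_le (hw γ)) (fun γ => (hq γ).1) hcase hf' hf⟩

theorem residual_add_le {a : Γ → ℝ} {L U : ℝ} {f f' : H} (hw : ∀ γ, 0 ≤ w γ)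
    (hL : 0 ≤ L) (hU : 0 ≤ U) (ha : ∀ γ, a γ ∈ Set.Icc L U)
    (h : tikhonov K e (fun γ => a γ * w γ) q g f ≤ tikhonov K e (fun γ => a γ * w γ) q g f') :
    ‖K f - g‖ₑ ^ 2 + ENNReal.ofReal L * coeffPenalty e w q f ≤
      ‖K f' - g‖ₑ ^ 2 + ENNReal.ofReal U * coeffPenalty e w q f' := by
  rw [← coeffPenalty.const_mul_weight hL, ← coeffPenalty.const_mul_weight hU]
  refine le_trans ?_ (h.trans ?_)
  · exact add_le_add_right (coeffPenalty.mono_weight (fun γ =>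
      mul_le_mul_of_nonneg_right (ha γ).1 (hw γ)) f) _
  · exact add_le_add_right (coeffPenalty.mono_weight (fun γ =>
      mul_le_mul_of_nonneg_right (ha γ).2 (hw γ)) f') _

end tikhonov

section Stability

variable {Γ H F X : Type*} [NormedAddCommGroup H] [InnerProductSpace ℝ H]
  [NormedAddCommGroup F] [NormedSpace ℝ F] {K : H →L[ℝ] F}
  {e : HilbertBasis Γ ℝ H} {w q : Γ → ℝ} {c : ℝ} {l : Filter X} {x : X → H} {y : H}

theorem eq_of_coeffPenalty_le [StrictConvexSpace ℝ F] (hw : ∀ γ, 0 < w γ) (hq : ∀ γ, 1 ≤ q γ)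
    (hcase : Function.Injective K ∨ ∀ γ, 1 < q γ) (hy : coeffPenalty e w q y ≠ ⊤)
    (hmin : ∀ f, K f = K y → coeffPenalty e w q y ≤ coeffPenalty e w q f) {f : H}
    (hKf : K f = K y) (hf : coeffPenalty e w q f ≤ coeffPenalty e w q y) : f = y := by
  have heq {f : H} (hKf : K f = K y) : tikhonov K e w q (K y) f = coeffPenalty e w q f := by
    simp [tikhonov, hKf]
  have hKmid : K (midpoint ℝ f y) = K y := by
    rw [← sub_eq_zero, tikhonov.residual_midpoint, hKf, sub_self, midpoint_self]
  by_contra hne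
  have hlt := tikhonov.two_mul_midpoint_lt (e := e) (g := K y) hw hq hcase hne
    (by rw [heq hKf]; exact ne_top_of_le_ne_top hy hf) (by rwa [heq rfl])
  rw [heq hKf, heq rfl, heq hKmid] at hlt
  refine hlt.not_ge ?_
  rw [two_mul]
  exact add_le_add (hf.trans (hmin _ hKmid)) (hmin _ hKmid)

theorem tendsto_of_tendsto_apply_of_coeffPenalty_le (hc : 0 < c) (hw : ∀ γ, c ≤ w γ)
    (hq : ∀ γ, q γ ∈ Set.Icc 1 2) (hy : coeffPenalty e w q y ≠ ⊤)
    (huniq : ∀ f, K f = K y → coeffPenalty e w q f ≤ coeffPenalty e w q y → f = y)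
    (hK : Tendsto (fun k => K (x k)) l (𝓝 (K y))) {u : X → ℝ≥0∞}
    (hu : Tendsto u l (𝓝 (coeffPenalty e w q y)))
    (hxu : ∀ᶠ k in l, coeffPenalty e w q (x k) ≤ u k) :
    Tendsto x l (𝓝 y) := by
  have : CompleteSpace H := e.repr.toIsometryEquiv.completeSpace
  obtain ⟨r, hr⟩ := coeffPenalty.exists_norm_le (e := e) hc hw hq
    (ENNReal.add_ne_top.2 ⟨hy, ENNReal.one_ne_top⟩)
  have hbdd : ∀ᶠ k in l, ‖x k‖ ≤ r := by
    filter_upwards [hxu, hu.eventually_lt_const (ENNReal.lt_add_right hy one_ne_zero)] with k hk hk'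
    exact hr _ (hk.trans hk'.le)
  rw [tendsto_iff_ultrafilter]
  intro V hV
  obtain ⟨z, hz⟩ := exists_tendsto_toWeakSpace_of_eventually_norm_le (hV hbdd)
  have hcoeff (γ : Γ) : Tendsto (fun k => ⟪x k, e γ⟫) V (𝓝 ⟪z, e γ⟫) :=
    tendsto_inner_of_tendsto_toWeakSpace hz (e γ)
  have hlimsup : limsup (fun k => coeffPenalty e w q (x k)) V ≤ coeffPenalty e w q y :=
    (limsup_le_limsup (hV hxu)).trans (hu.mono_left hV).limsup_eq.le
  obtain rfl : z = y := huniq z (apply_eq_of_tendsto_toWeakSpace hz (hK.mono_left hV))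
    ((coeffPenalty.le_liminf hcoeff).trans (le_trans liminf_le_limsup hlimsup))
  exact coeffPenalty.tendsto_of_tendsto_inner_of_limsup_le hc hw hq hy hcoeff hlimsup

theorem tendsto_of_tikhonov_le {g : X → F} {a : X → Γ → ℝ} {L U : X → ℝ} (hc : 0 < c)
    (hw : ∀ γ, c ≤ w γ) (hq : ∀ γ, q γ ∈ Set.Icc 1 2) (hy : coeffPenalty e w q y ≠ ⊤)
    (huniq : ∀ f, K f = K y → coeffPenalty e w q f ≤ coeffPenalty e w q y → f = y)
    (hL : ∀ᶠ k in l, 0 < L k) (hLU : ∀ᶠ k in l, L k ≤ U k)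
    (ha : ∀ᶠ k in l, ∀ γ, a k γ ∈ Set.Icc (L k) (U k))
    (hU : Tendsto U l (𝓝 0)) (hUL : Tendsto (fun k => U k / L k) l (𝓝 1))
    (hg : Tendsto g l (𝓝 (K y))) (hnoise : Tendsto (fun k => ‖K y - g k‖ ^ 2 / L k) l (𝓝 0))
    (hx : ∀ᶠ k in l, tikhonov K e (fun γ => a k γ * w γ) q (g k) (x k) ≤
      tikhonov K e (fun γ => a k γ * w γ) q (g k) y) : Tendsto x l (𝓝 y) := by
  have hcompare : ∀ᶠ k in l,
      ‖K (x k) - g k‖ₑ ^ 2 + ENNReal.ofReal (L k) * coeffPenalty e w q (x k) ≤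
        ‖K y - g k‖ₑ ^ 2 + ENNReal.ofReal (U k) * coeffPenalty e w q y := by
    filter_upwards [hL, hLU, ha, hx] with k hLk hLUk hak hxk
    exact tikhonov.residual_add_le (fun γ => hc.le.trans (hw γ)) hLk.le (hLk.le.trans hLUk) hak hxk
  have hresidual_y : Tendsto (fun k => K y - g k) l (𝓝 0) := by
    simpa using hg.const_sub (K y)
  have hresidual : Tendsto (fun k => K (x k) - g k) l (𝓝 0) := by
    refine tendsto_zero_of_tendsto_enorm_sq <| tendsto_of_tendsto_of_tendsto_of_le_of_le'
      tendsto_const_nhds ?_ (Eventually.of_forall fun _ => zero_le)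
      (hcompare.mono fun k hk => le_self_add.trans hk)
    simpa using (ENNReal.Tendsto.pow (n := 2) hresidual_y.enorm).add
      (ENNReal.Tendsto.mul_const (ENNReal.tendsto_ofReal hU) (Or.inr hy))
  have hK : Tendsto (fun k => K (x k)) l (𝓝 (K y)) := by simpa using hresidual.add hg
  refine tendsto_of_tendsto_apply_of_coeffPenalty_le hc hw hq hy huniq hK
    (u := fun k => ENNReal.ofReal (‖K y - g k‖ ^ 2 / L k) +
      ENNReal.ofReal (U k / L k) * coeffPenalty e w q y) ?_ ?_
  · simpa using (ENNReal.tendsto_ofReal hnoise).add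
      (ENNReal.Tendsto.mul_const (ENNReal.tendsto_ofReal hUL) (Or.inr hy))
  · filter_upwards [hcompare, hL] with k hk hLk
    rw [ENNReal.ofReal_div_of_pos hLk, ENNReal.ofReal_div_of_pos hLk, ENNReal.mul_comm_div,
      ← mul_div_assoc, ← ENNReal.add_div, ENNReal.ofReal_pow (norm_nonneg _), ofReal_norm,
      ENNReal.le_div_iff_mul_le (by simp [hLk]) (by simp), mul_comm]
    exact le_add_self.trans hk

end Stability

section UniformLimits

theorem tendsto_apply_select {ι X Y : Type*} [Finite ι] [TopologicalSpace Y] {l : Filter X}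
    {f : ι → X → Y} {b : Y} (h : ∀ i, Tendsto (f i) l (𝓝 b)) (σ : X → ι) :
    Tendsto (fun x => f (σ x) x) l (𝓝 b) := fun _ hs =>
  (eventually_all.2 fun i => h i hs).mono fun x hx => hx (σ x)

theorem exists_bounds_of_tendsto {ι : Type*} [Finite ι] {α : ι → ℝ → ℝ}
    (hpos : ∀ i ε, 0 < ε → 0 < α i ε) (hα : ∀ i, Tendsto (α i) (𝓝[>] 0) (𝓝 0))
    (hsq : ∀ i, Tendsto (fun ε => ε ^ 2 / α i ε) (𝓝[>] 0) (𝓝 0))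
    (hratio : ∀ i j, Tendsto (fun ε => α i ε / α j ε) (𝓝[>] 0) (𝓝 1)) :
    ∃ L U : ℝ → ℝ, (∀ ε, 0 < ε → 0 < L ε ∧ L ε ≤ U ε ∧ ∀ i, α i ε ∈ Set.Icc (L ε) (U ε)) ∧
      Tendsto U (𝓝[>] 0) (𝓝 0) ∧ Tendsto (fun ε => ε ^ 2 / L ε) (𝓝[>] 0) (𝓝 0) ∧
      Tendsto (fun ε => U ε / L ε) (𝓝[>] 0) (𝓝 1) := by
  rcases isEmpty_or_nonempty ι with hι | hι
  · have hid : Tendsto (fun ε : ℝ => ε) (𝓝[>] 0) (𝓝 0) :=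
      tendsto_nhdsWithin_of_tendsto_nhds tendsto_id
    refine ⟨id, id, fun ε hε => ⟨hε, le_rfl, isEmptyElim⟩, hid, by simpa [pow_two] using hid,
      tendsto_const_nhds.congr' ?_⟩
    filter_upwards [self_mem_nhdsWithin] with ε hε
    exact (div_self (ne_of_gt hε)).symm
  · choose imin hmin using fun ε => Finite.exists_min fun i => α i ε
    choose imax hmax using fun ε => Finite.exists_max fun i => α i ε
    exact ⟨fun ε => α (imin ε) ε, fun ε => α (imax ε) ε,
      fun ε hε => ⟨hpos _ ε hε, hmax ε _, fun i => ⟨hmin ε i, hmax ε i⟩⟩,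
      tendsto_apply_select hα imax, tendsto_apply_select hsq imin,
      tendsto_apply_select (fun ij : ι × ι => hratio ij.1 ij.2) fun ε => (imax ε, imin ε)⟩

theorem tendsto_iSup_enorm_sub_zero {E G X : Type*} [NormedAddCommGroup E] {l : Filter X}
    {S : X → Set G} {x : X → G → E} {y : E}
    (h : Tendsto (fun k : X × G => x k.1 k.2) (comap Prod.fst l ⊓ 𝓟 {k | k.2 ∈ S k.1}) (𝓝 y)) :
    Tendsto (fun k => ⨆ g ∈ S k, ‖x k g - y‖ₑ) l (𝓝 0) := by
  rw [ENNReal.tendsto_nhds_zero]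
  intro δ hδ
  have hclose := EMetric.tendsto_nhds.1 h δ hδ
  rw [eventually_inf_principal, eventually_comap] at hclose
  filter_upwards [hclose] with k hk
  refine iSup₂_le fun g hg => ?_
  rw [← edist_eq_enorm_sub]
  exact (hk (k, g) rfl hg).le

theorem exists_pos_forall_le {ι : Type*} [Finite ι] {a : ι → ℝ} (ha : ∀ i, 0 < a i) :
    ∃ b > 0, ∀ i, b ≤ a i := by
  have hle : ∀ᶠ b in 𝓝[>] (0 : ℝ), ∀ i, b ≤ a i :=
    eventually_all.2 fun i => nhdsWithin_le_nhds (eventually_le_nhds (ha i))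
  have hpos : ∀ᶠ b in 𝓝[>] (0 : ℝ), 0 < b := self_mem_nhdsWithin
  exact (hpos.and hle).exists

end UniformLimits

section Main

variable {Γ H F ι : Type*} [NormedAddCommGroup H] [InnerProductSpace ℝ H]
  [NormedAddCommGroup F] [NormedSpace ℝ F] [Finite ι] {K : H →L[ℝ] F}
  {e : HilbertBasis Γ ℝ H} {w q : Γ → ℝ} {c : ℝ} {part : Γ → ι}

theorem tendsto_iSup_enorm_sub_of_tikhonov_le {y : H} {α : ι → ℝ → ℝ} {x : ℝ → F → H} (hc : 0 < c)
    (hw : ∀ γ, c ≤ w γ) (hq : ∀ γ, q γ ∈ Set.Icc 1 2) (hy : coeffPenalty e w q y ≠ ⊤)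
    (huniq : ∀ f, K f = K y → coeffPenalty e w q f ≤ coeffPenalty e w q y → f = y)
    (hpos : ∀ i ε, 0 < ε → 0 < α i ε) (hα : ∀ i, Tendsto (α i) (𝓝[>] 0) (𝓝 0))
    (hsq : ∀ i, Tendsto (fun ε => ε ^ 2 / α i ε) (𝓝[>] 0) (𝓝 0))
    (hratio : ∀ i j, Tendsto (fun ε => α i ε / α j ε) (𝓝[>] 0) (𝓝 1))
    (hx : ∀ ε > 0, ∀ g, tikhonov K e (fun γ => α (part γ) ε * w γ) q g (x ε g) ≤
      tikhonov K e (fun γ => α (part γ) ε * w γ) q g y) :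
    Tendsto (fun ε => ⨆ g ∈ {g | ‖g - K y‖ < ε}, ‖x ε g - y‖ₑ) (𝓝[>] 0) (𝓝 0) := by
  obtain ⟨L, U, hLU, hU, hsqL, hUL⟩ := exists_bounds_of_tendsto hpos hα hsq hratio
  refine tendsto_iSup_enorm_sub_zero ?_
  set l : Filter (ℝ × F) := comap Prod.fst (𝓝[>] 0) ⊓ 𝓟 {k | k.2 ∈ {g | ‖g - K y‖ < k.1}}
  have hfst : Tendsto Prod.fst l (𝓝[>] 0) := tendsto_comap.mono_left inf_le_left
  have hε : ∀ᶠ k in l, 0 < k.1 := hfst.eventually self_mem_nhdsWithin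
  have hnoise : ∀ᶠ k in l, ‖k.2 - K y‖ < k.1 := mem_inf_of_right (mem_principal_self _)
  have hg : Tendsto Prod.snd l (𝓝 (K y)) :=
    tendsto_iff_norm_sub_tendsto_zero.2 <| squeeze_zero'
      (Eventually.of_forall fun _ => norm_nonneg _)
      (hnoise.mono fun _ hk => hk.le) (hfst.mono_right nhdsWithin_le_nhds)
  refine tendsto_of_tikhonov_le hc hw hq hy huniq (g := Prod.snd)
    (a := fun k γ => α (part γ) k.1) (L := fun k => L k.1) (U := fun k => U k.1)
    (hε.mono fun k hk => (hLU k.1 hk).1) (hε.mono fun k hk => (hLU k.1 hk).2.1)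
    (hε.mono fun k hk γ => (hLU k.1 hk).2.2 (part γ)) (hU.comp hfst) (hUL.comp hfst) hg ?_
    (hε.mono fun k hk => hx k.1 hk k.2)
  refine squeeze_zero' (hε.mono fun k hk => div_nonneg (sq_nonneg _) (hLU k.1 hk).1.le) ?_
    (hsqL.comp hfst)
  filter_upwards [hε, hnoise] with k hk hnoise_k
  rw [norm_sub_rev]
  exact div_le_div_of_nonneg_right (pow_le_pow_left₀ (norm_nonneg _) hnoise_k.le 2)
    (hLU k.1 hk).1.le

theorem stmt_19_general [StrictConvexSpace ℝ F] {y : H} {α : ι → ℝ → ℝ} (hc : 0 < c)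
    (hw : ∀ γ, c ≤ w γ) (hq : ∀ γ, q γ ∈ Set.Icc 1 2)
    (hcase : Function.Injective K ∨ ∀ γ, 1 < q γ) (hy : coeffPenalty e w q y ≠ ⊤)
    (hmin : ∀ f, K f = K y → coeffPenalty e w q y ≤ coeffPenalty e w q f)
    (hpos : ∀ i ε, 0 < ε → 0 < α i ε) (hα : ∀ i, Tendsto (α i) (𝓝[>] 0) (𝓝 0))
    (hsq : ∀ i, Tendsto (fun ε => ε ^ 2 / α i ε) (𝓝[>] 0) (𝓝 0))
    (hratio : ∀ i j, Tendsto (fun ε => α i ε / α j ε) (𝓝[>] 0) (𝓝 1)) :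
    (∀ (a : ι → ℝ) (g : F), (∀ i, 0 < a i) →
      ∃! f, ∀ f', tikhonov K e (fun γ => a (part γ) * w γ) q g f ≤
        tikhonov K e (fun γ => a (part γ) * w γ) q g f') ∧
    ∀ x : ℝ → F → H,
      (∀ ε > 0, ∀ g f, tikhonov K e (fun γ => α (part γ) ε * w γ) q g (x ε g) ≤
        tikhonov K e (fun γ => α (part γ) ε * w γ) q g f) →
      Tendsto (fun ε => ⨆ g ∈ {g | ‖g - K y‖ < ε}, ‖x ε g - y‖ₑ) (𝓝[>] 0) (𝓝 0) := by
  refine ⟨fun a g ha => ?_, fun x hx => ?_⟩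
  · obtain ⟨b, hb, hba⟩ := exists_pos_forall_le ha
    exact tikhonov.existsUnique_forall_le (mul_pos hb hc)
      (fun γ => mul_le_mul (hba (part γ)) (hw γ) hc.le (ha (part γ)).le) hq hcase
  · exact tendsto_iSup_enorm_sub_of_tikhonov_le hc hw hq hy
      (fun f => eq_of_coeffPenalty_le (fun γ => hc.trans_le (hw γ)) (fun γ => (hq γ).1) hcase
        hy hmin)
      hpos hα hsq hratio fun ε hε g => hx ε hε g y

end Main

/-- Regularization theorem: each `Φ_{α;g}` (with all `α_i > 0`) has a unique minimizer
`f*_{α;g}`, and as `ε → 0⁺`, `sup { ‖f*_{α(ε);g} − f†‖ : ‖g − Kf₀‖ < ε } → 0`, where `f†` is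
the `N`-minimal element of `{f : Kf = Kf₀}`. -/
theorem stmt_19
    {H H' : Type*} [NormedAddCommGroup H] [InnerProductSpace ℝ H] [CompleteSpace H]
    [NormedAddCommGroup H'] [InnerProductSpace ℝ H'] [CompleteSpace H']
    {Γ : Type*} [Countable Γ]
    (e : HilbertBasis Γ ℝ H)
    (K : H →L[ℝ] H') (hKnorm : ‖K‖ < 1)
    (n : ℕ) (part : Γ → Fin n) (hpart : Function.Surjective part)
    (w : Γ → ℝ) (c : ℝ) (hc : 0 < c) (hw : ∀ γ, c ≤ w γ)
    (p : Fin n → ℝ) (hp : ∀ i, 1 ≤ p i ∧ p i ≤ 2)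
    (Nf : H → ℝ≥0∞)
    (hNf : ∀ f, Nf f = ∑' γ, ENNReal.ofReal (w γ * |⟪f, e γ⟫| ^ (p (part γ))))
    (hcase : Function.Injective K ∨ ∀ i, 1 < p i)
    (Φ : (Fin n → ℝ) → H' → H → ℝ≥0∞)
    (hΦ : ∀ α g f, Φ α g f = ENNReal.ofReal (‖K f - g‖ ^ 2) +
      ∑' γ, ENNReal.ofReal (α (part γ) * (w γ * |⟪f, e γ⟫| ^ (p (part γ)))))
    (fstar : (Fin n → ℝ) → H' → H)
    (hfstar : ∀ (α : Fin n → ℝ) (g : H'), (∀ i, 0 < α i) →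
      ∀ f : H, Φ α g (fstar α g) ≤ Φ α g f)
    (f0 : H)
    (hex : ∃ f : H, K f = K f0 ∧ Nf f ≠ ⊤)
    (fd : H) (hfd1 : K fd = K f0)
    (hfd2 : ∀ f : H, K f = K f0 → Nf fd ≤ Nf f)
    (αf : Fin n → ℝ → ℝ)
    (hαpos : ∀ i ε, 0 < ε → 0 < αf i ε)
    (hα0 : ∀ i, Filter.Tendsto (fun ε => αf i ε) (nhdsWithin 0 (Set.Ioi 0)) (nhds 0))
    (hα1 : ∀ i, Filter.Tendsto (fun ε => ε ^ 2 / αf i ε)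
      (nhdsWithin 0 (Set.Ioi 0)) (nhds 0))
    (hα2 : ∀ i j, Filter.Tendsto (fun ε => αf i ε / αf j ε)
      (nhdsWithin 0 (Set.Ioi 0)) (nhds 1)) :
    (∀ (α : Fin n → ℝ) (g : H'), (∀ i, 0 < α i) →
      ∃! fm : H, ∀ f : H, Φ α g fm ≤ Φ α g f) ∧
    Filter.Tendsto
      (fun ε : ℝ => ⨆ g ∈ { g : H' | ‖g - K f0‖ < ε },
        (‖fstar (fun i => αf i ε) g - fd‖₊ : ℝ≥0∞))
      (nhdsWithin 0 (Set.Ioi 0)) (nhds 0) := by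
  have hq (γ : Γ) : p (part γ) ∈ Set.Icc 1 2 := hp (part γ)
  have hq₀ (γ : Γ) : 0 ≤ p (part γ) := zero_le_one.trans (hq γ).1
  obtain rfl : Nf = coeffPenalty e w (fun γ => p (part γ)) :=
    funext fun f => (hNf f).trans (coeffPenalty.eq_tsum_ofReal hq₀ f).symm
  obtain rfl : Φ = fun α => tikhonov K e (fun γ => α (part γ) * w γ) (fun γ => p (part γ)) := by
    funext α g f
    simp only [hΦ, tikhonov.eq_ofReal_add_tsum_ofReal hq₀, mul_assoc]
  simp only [← hfd1] at hex hfd2 ⊢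
  obtain ⟨f, hKf, hf⟩ := hex
  have hmain := stmt_19_general (part := part) hc hw hq (hcase.imp_right fun h γ => h (part γ))
    (ne_top_of_le_ne_top hf (hfd2 f hKf)) hfd2 hαpos hα0 hα1 hα2
  exact ⟨hmain.1, hmain.2 (fun ε g => fstar (fun i => αf i ε) g) fun ε hε g =>
    hfstar _ g fun i => hαpos i ε hε⟩
end
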